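/- Let H be a fixed tree with vertex set {1,…,|H|}, let c>0 be a fixed constant, and let m:ℕ→ℕ satisfy cn ≤ m(n) ≤ (1+o(1))n as n→∞. Then there exists a constant λ>0 (depending on H and c) such that, for all sufficiently large n, the probability that P_{n,m(n)} has fewer than ⌈λ·add(n,m(n))/n⌉ components admitting an order-preserving isomorphism to H is less than e^{−⌈λ·add(n,m(n))/n⌉}. -/

import Mathlib

open SimpleGraph Filter Asymptotics

/-- `H` is a minor of `G`: to each vertex of `H` we can assign a connected nonempty
branch set in `G`, pairwise disjoint, with an edge of `G` between the branch sets of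
any two adjacent vertices of `H`. -/
def IsMinor {α β : Type*} (H : SimpleGraph α) (G : SimpleGraph β) : Prop :=
  ∃ f : α → Set β,
    (∀ a, (G.induce (f a)).Connected) ∧
    (∀ a b, a ≠ b → Disjoint (f a) (f b)) ∧
    (∀ a b, H.Adj a b → ∃ u ∈ f a, ∃ v ∈ f b, G.Adj u v)

/-- A graph is planar iff it has neither a `K₅`-minor nor a `K₃,₃`-minor
(Wagner's theorem). -/
def IsPlanar {V : Type*} (G : SimpleGraph V) : Prop :=
  ¬ IsMinor (completeGraph (Fin 5)) G ∧
    ¬ IsMinor (completeBipartiteGraph (Fin 3) (Fin 3)) G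

/-- The number of edges of a graph. -/
noncomputable def edgeCount {V : Type*} (G : SimpleGraph V) : ℕ :=
  G.edgeSet.ncard

/-- The degree of a vertex. -/
noncomputable def vertexDegree {V : Type*} (G : SimpleGraph V) (v : V) : ℕ :=
  (G.neighborSet v).ncard

/-- `𝒫(n,m)`: the set of labelled planar graphs on `{1,…,n}` with exactly `m` edges. -/
def planarSet (n m : ℕ) : Set (SimpleGraph (Fin n)) :=
  {G | IsPlanar G ∧ edgeCount G = m}

/-- The probability that the uniform random planar graph `P_{n,m}` satisfies `P`. -/
noncomputable def planarProb (n m : ℕ) (P : SimpleGraph (Fin n) → Prop) : ℝ :=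
  ({G ∈ planarSet n m | P G}.ncard : ℝ) / ((planarSet n m).ncard : ℝ)

/-- The number of pendant edges (edges incident to a vertex of degree 1). -/
noncomputable def pendantCount {V : Type*} (G : SimpleGraph V) : ℕ :=
  {e ∈ G.edgeSet | ∃ v ∈ e, vertexDegree G v = 1}.ncard

/-- The set of addable non-edges of `G`: non-edges whose addition keeps the graph planar. -/
def addableSet {V : Type*} (G : SimpleGraph V) : Set (Sym2 V) :=
  {e | ¬ e.IsDiag ∧ e ∉ G.edgeSet ∧ IsPlanar (G ⊔ SimpleGraph.fromEdgeSet {e})}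

/-- `add(n,m)`: the minimum number of addable non-edges over all graphs in `𝒫(n,m)`. -/
noncomputable def addMin (n m : ℕ) : ℕ :=
  sInf ((fun G => (addableSet G).ncard) '' planarSet n m)

/-- `W` carries an induced order-preserving copy of `H` in `G`: the increasing bijection
from `{1,…,h}` to `W` is an isomorphism between `H` and the induced subgraph `G[W]`. -/
def IsOrderCopy {h n : ℕ} (H : SimpleGraph (Fin h)) (G : SimpleGraph (Fin n))
    (W : Finset (Fin n)) : Prop :=
  ∃ hW : W.card = h,
    ∀ i j : Fin h,
      H.Adj i j ↔ G.Adj ((W.orderIsoOfFin hW i : Fin n)) ((W.orderIsoOfFin hW j : Fin n))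

/-- `W` is the vertex set of a connected component of `G`. -/
def IsComponent {V : Type*} (G : SimpleGraph V) (W : Finset V) : Prop :=
  (G.induce (W : Set V)).Connected ∧ ∀ v ∈ W, ∀ u, G.Adj v u → u ∈ W

/-- The number of components of `G` admitting an order-preserving isomorphism to `H`. -/
noncomputable def numOrderComponents {h n : ℕ} (H : SimpleGraph (Fin h))
    (G : SimpleGraph (Fin n)) : ℕ :=
  {W : Finset (Fin n) | IsComponent G W ∧ IsOrderCopy H G W}.ncard

/-- The number of distinct cycles (as subgraphs, identified with their edge sets) of
length at most `k` in `S`. -/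
noncomputable def cycleCountLe {V : Type*} (S : SimpleGraph V) (k : ℕ) : ℕ :=
  {E : Set (Sym2 V) | ∃ (v : V) (c : S.Walk v v),
    c.IsCycle ∧ c.length ≤ k ∧ {e | e ∈ c.edges} = E}.ncard

/-!
Let `h` be the order of `H` and `m` the number of edges. A planar graph with few copies of `H` is
turned into another one in three steps: add one of its at least `add(n, m)` addable edges; then, `h`
times, isolate one more vertex by a swap that loses exactly one edge; finally plant a copy of the
tree `H` on the `h` isolated vertices, which brings the number of edges back to `m` and creates at
most `6h + 2` new copies in all. Since `m` is close to `n`, linearly many vertices have degree at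
most two. An isolated vertex is isolated already, so any other edge is given up; a leaf loses its
edge; a vertex of degree two is suppressed if its neighbours are not adjacent, and otherwise its two
edges are traded for an addable edge elsewhere. In each of these cases the number of choices matches
the number of graphs that may lead to the same result, up to a constant factor. Hence undoing a
round costs `O(n)` for the added edge and one of the `t` copies of `H` for the planted one: if `a s`
is the number of graphs with at most `s` copies, then, for a constant `C`,
`a s * add(n, m) ≤ a (s + C) * (s + C) * O(n)`. For `s` up to a small multiple of `add(n, m) / n`
each round gains a factor of three, and `T` rounds bound the probability of having fewer than `T`
copies by `3 ^ (-T) < e ^ (-T)`.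

The rounds need `add(n, m) / n` to be large. Stripping leaves one after another removes the vertices
of degree one, and every edge that can be added to the remaining graph lifts to `G`. If many
components remain, the edges between them are addable. Otherwise a graph with at most `(1 + ε) n`
edges falls apart, after the deletion of its few vertices of degree at least three, into few paths
and cycles of vertices of degree two, and any two vertices of the same one can be joined.

Planarity of the modified graphs rests on the minor definition: `K₅` and `K₃,₃` are 3-connected, so if
one of them is a minor of a clique sum along at most two vertices, it is a minor of one of the two
sides; and suppressing a vertex of degree two is a contraction.
-/

section Minors

variable {α β γ : Type*} {H : SimpleGraph α} {G : SimpleGraph β}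

lemma connected_of_adj_reachable {V W : Type*} {A : SimpleGraph V} {B : SimpleGraph W}
    (hA : A.Connected) (φ : V → W) (hadj : ∀ x y, A.Adj x y → B.Reachable (φ x) (φ y))
    (hmeet : ∀ w, ∃ x, B.Reachable w (φ x)) : B.Connected := by
  have hreach (x y : V) (p : A.Walk x y) : B.Reachable (φ x) (φ y) := by
    induction p with
    | nil => rfl
    | cons h _ ih => exact (hadj _ _ h).trans ih
  have : Nonempty W := hA.nonempty.map φ
  refine ⟨fun u v => ?_⟩
  obtain ⟨x, hx⟩ := hmeet u
  obtain ⟨y, hy⟩ := hmeet v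
  obtain ⟨p⟩ := hA.preconnected x y
  exact hx.trans ((hreach x y p).trans hy.symm)

lemma isMinor_of_injective (φ : H →g G) (hφ : Function.Injective φ) : IsMinor H G := by
  refine ⟨fun a => {φ a}, fun a => ?_, fun a b hab => ?_, fun a b hab => ?_⟩
  · simp
  · simpa using hφ.ne hab
  · exact ⟨φ a, rfl, φ b, rfl, φ.map_adj hab⟩

lemma IsMinor.trans {F : SimpleGraph γ} (hHG : IsMinor H G) (hGF : IsMinor G F) :
    IsMinor H F := by
  obtain ⟨f, hf, hfdisj, hfadj⟩ := hHG
  obtain ⟨g, hg, hgdisj, hgadj⟩ := hGF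
  refine ⟨fun a => ⋃ b ∈ f a, g b, fun a => ?_, fun a a' haa' => ?_, fun a a' haa' => ?_⟩
  · have hsub {b : β} (hb : b ∈ f a) : g b ⊆ ⋃ b ∈ f a, g b := Set.subset_biUnion_of_mem hb
    have hin {b : β} (hb : b ∈ f a) (z w : g b) :
        (F.induce (⋃ b ∈ f a, g b)).Reachable ⟨z, hsub hb z.2⟩ ⟨w, hsub hb w.2⟩ :=
      ((hg b).preconnected z w).map (induceHomOfLE F (hsub hb)).toHom
    choose r hr using fun b => Set.nonempty_coe_sort.1 (hg b).nonempty
    refine connected_of_adj_reachable (hf a) (fun b => ⟨r b, hsub b.2 (hr b)⟩) ?_ ?_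
    · intro b b' hbb'
      obtain ⟨u, hu, v, hv, huv⟩ := hgadj b b' hbb'
      exact (hin b.2 ⟨_, hr b⟩ ⟨u, hu⟩).trans <|
        (Adj.reachable (G := F.induce _) (u := ⟨u, hsub b.2 hu⟩) (v := ⟨v, hsub b'.2 hv⟩) huv).trans
          (hin b'.2 ⟨v, hv⟩ ⟨_, hr b'⟩)
    · rintro ⟨z, hz⟩
      obtain ⟨b, hb, hzb⟩ := Set.mem_iUnion₂.1 hz
      exact ⟨⟨b, hb⟩, hin hb ⟨z, hzb⟩ ⟨_, hr b⟩⟩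
  · simp only [Set.disjoint_iUnion_left, Set.disjoint_iUnion_right]
    exact fun b hb b' hb' => hgdisj _ _ ((hfdisj a a' haa').ne_of_mem hb' hb)
  · obtain ⟨b, hb, b', hb', hbb'⟩ := hfadj a a' haa'
    obtain ⟨u, hu, v, hv, huv⟩ := hgadj b b' hbb'
    exact ⟨u, Set.mem_biUnion hb hu, v, Set.mem_biUnion hb' hv, huv⟩

lemma IsMinor.card_le [Finite β] (h : IsMinor H G) : Nat.card α ≤ Nat.card β := by
  obtain ⟨f, hf, hdisj, -⟩ := h
  choose r hr using fun a => Set.nonempty_coe_sort.1 (hf a).nonempty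
  refine Nat.card_le_card_of_injective r fun a b hab => ?_
  by_contra hne
  exact (hdisj a b hne).ne_of_mem (hr a) (hr b) hab

/-- Vertex connectivity at least `k`: the graph has more than `k` vertices, and stays connected
when fewer than `k` of them are deleted. -/
def IsKConnected (k : ℕ) (K : SimpleGraph α) : Prop :=
  k < Nat.card α ∧ ∀ X : Finset α, X.card < k → (K.induce (X : Set α)ᶜ).Connected

lemma exists_apply_notMem_of_card_lt {φ : α → β} (hφ : Function.Injective φ) {X : Finset β}
    (hX : X.card < Nat.card α) : ∃ a, φ a ∉ X := by
  by_contra! hall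
  have := Nat.card_le_card_of_injective (β := X) (fun a => ⟨φ a, hall a⟩)
    fun a b h => hφ (Subtype.ext_iff.1 h)
  rw [Nat.card_eq_finsetCard] at this
  omega

lemma isKConnected_completeGraph {k : ℕ} (hk : k < Nat.card α) :
    IsKConnected k (completeGraph α) := by
  refine ⟨hk, fun X hX => ?_⟩
  obtain ⟨a, ha⟩ := exists_apply_notMem_of_card_lt Function.injective_id (hX.trans hk)
  have : Nonempty ((X : Set α)ᶜ : Set α) := ⟨⟨a, ha⟩⟩
  rw [completeGraph_eq_top, induce_top]
  exact connected_top

lemma isKConnected_completeBipartiteGraph [Finite α] [Finite β] {k : ℕ} (hk : 0 < k)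
    (hα : k ≤ Nat.card α) (hβ : k ≤ Nat.card β) :
    IsKConnected k (completeBipartiteGraph α β) := by
  refine ⟨by rw [Nat.card_sum]; omega, fun X hX => ?_⟩
  obtain ⟨a, ha⟩ := exists_apply_notMem_of_card_lt Sum.inl_injective (hX.trans_le hα)
  obtain ⟨b, hb⟩ := exists_apply_notMem_of_card_lt Sum.inr_injective (hX.trans_le hβ)
  have hab : ((completeBipartiteGraph α β).induce (X : Set (α ⊕ β))ᶜ).Adj ⟨_, ha⟩ ⟨_, hb⟩ := by
    simp
  refine (connected_iff_exists_forall_reachable _).2 ⟨⟨_, ha⟩, ?_⟩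
  rintro ⟨a' | b', h'⟩
  · exact hab.reachable.trans (Adj.reachable (by simp))
  · exact Adj.reachable (by simp)

lemma forall_of_connected_of_adj {V : Type*} {A : SimpleGraph V} (hA : A.Connected) {P : V → Prop}
    (hP : ∀ x y, A.Adj x y → P x → P y) {x : V} (hx : P x) (y : V) : P y := by
  obtain ⟨p⟩ := hA.preconnected x y
  induction p with
  | nil => exact hx
  | cons h _ ih => exact ih (hP _ _ h hx)

section CliqueSum

variable {A B : Set β}

/-- A vertex outside `A` is replaced by a vertex of its branch set in the clique `A ∩ B`. -/
lemma isMinor_induce_of_branchSets {f : α → Set β} (hsep : ∀ a ∈ A \ B, ∀ b ∉ A, ¬ G.Adj a b)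
    (hclique : G.IsClique (A ∩ B)) (hf : ∀ a, (G.induce (f a)).Connected)
    (hdisj : ∀ a b, a ≠ b → Disjoint (f a) (f b))
    (hadj : ∀ a b, H.Adj a b → ∃ u ∈ f a, ∃ v ∈ f b, G.Adj u v)
    (hside : ∀ a, (f a ∩ (A ∩ B)).Nonempty ∨ f a ⊆ A) : IsMinor H (G.induce A) := by
  classical
  have hroot (a : α) : ∃ r ∈ f a, r ∈ A ∧ (r ∈ B ∨ f a ⊆ A) := by
    obtain ⟨r, hr, hrA, hrB⟩ | hA := hside a
    · exact ⟨r, hr, hrA, .inl hrB⟩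
    · obtain ⟨r, hr⟩ := Set.nonempty_coe_sort.1 (hf a).nonempty
      exact ⟨r, hr, hA hr, .inr hA⟩
  choose r hrf hrA hrB using hroot
  let ρ (a : α) (u : β) : β := if u ∈ A then u else r a
  have hρf {a u} (hu : u ∈ f a) : ρ a u ∈ f a := by grind
  have hρA (a u) : ρ a u ∈ A := by grind
  have hρadj {a b u v} (hu : u ∈ f a) (hv : v ∈ f b) (huv : G.Adj u v) :
      ρ a u = ρ b v ∨ G.Adj (ρ a u) (ρ b v) := by
    have _ := hsep u
    have _ := hsep v
    have := huv.symm
    have hcl {x y} (hx : x ∈ A ∩ B) (hy : y ∈ A ∩ B) : x = y ∨ G.Adj x y :=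
      or_iff_not_imp_left.2 (hclique hx hy)
    grind
  refine ⟨fun a => Subtype.val ⁻¹' f a, fun a => ?_, fun a b hab => ?_, fun a b hab => ?_⟩
  · refine connected_of_adj_reachable (hf a) (fun u => ⟨⟨ρ a u, hρA a u⟩, hρf u.2⟩) ?_ ?_
    · intro u v huv
      obtain h | h := hρadj u.2 v.2 huv
      · simp only [h, Reachable.refl]
      · exact Adj.reachable h
    · rintro ⟨⟨u, huA⟩, hu⟩
      refine ⟨⟨u, hu⟩, ?_⟩
      simp only [ρ, if_pos huA, Reachable.refl]
  · exact (hdisj a b hab).preimage _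
  · obtain ⟨u, hu, v, hv, huv⟩ := hadj a b hab
    exact ⟨⟨ρ a u, hρA a u⟩, hρf hu, ⟨ρ b v, hρA b v⟩, hρf hv, (hρadj hu hv huv).resolve_left
      ((hdisj a b hab.ne).ne_of_mem (hρf hu) (hρf hv))⟩

lemma subset_diff_of_connected {C : Set β} (hC : (G.induce C).Connected)
    (hcover : A ∪ B = Set.univ) (hsep : ∀ a ∈ A \ B, ∀ b ∈ B \ A, ¬ G.Adj a b)
    (hdisj : Disjoint C (A ∩ B)) {u : β} (huC : u ∈ C) (huA : u ∈ A) : C ⊆ A \ B := by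
  have hside (z : β) (hz : z ∈ C) : z ∈ A \ B ∨ z ∈ B \ A := by
    have := Set.disjoint_left.1 hdisj hz
    have := hcover.ge (Set.mem_univ z)
    grind
  intro v hv
  refine forall_of_connected_of_adj hC (P := fun z => (z : β) ∈ A \ B) (fun x y hxy hx => ?_)
    (x := ⟨u, huC⟩) ?_ ⟨v, hv⟩
  · exact (hside y y.2).resolve_right fun hy => hsep x hx y hy hxy
  · exact (hside u huC).resolve_right fun hu => hu.2 huA

lemma exists_finset_card_lt_of_encard_lt {f : α → Set β}
    (hdisj : ∀ a b, a ≠ b → Disjoint (f a) (f b)) {S : Set β} {k : ℕ} (hS : S.encard < k) :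
    ∃ X : Finset α, X.card < k ∧ ∀ a, a ∉ X ↔ Disjoint (f a) S := by
  choose s hs using fun a : {a | (f a ∩ S).Nonempty} => a.2
  have hcard : {a | (f a ∩ S).Nonempty}.encard ≤ S.encard := by
    refine Function.Embedding.encard_le ⟨fun a => ⟨s a, (hs a).2⟩, fun a b hab => ?_⟩
    by_contra hne
    exact (hdisj a b (Subtype.coe_ne_coe.2 hne)).ne_of_mem (hs a).1 (hs b).1 (Subtype.ext_iff.1 hab)
  obtain ⟨X, hX⟩ := (Set.finite_of_encard_le_coe (hcard.trans hS.le)).exists_finset_coe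
  refine ⟨X, ?_, fun a => ?_⟩
  · have := hcard.trans_lt hS
    rwa [← hX, Set.encard_coe_eq_coe_finsetCard, Nat.cast_lt] at this
  · rw [← Finset.mem_coe, hX, Set.mem_ofPred_eq, ← Set.not_disjoint_iff_nonempty_inter, not_not]

lemma IsMinor.induce_or_induce_of_cliqueSum {k : ℕ} (hH : IsKConnected k H)
    (hcover : A ∪ B = Set.univ) (hsep : ∀ a ∈ A \ B, ∀ b ∈ B \ A, ¬ G.Adj a b)
    (hclique : G.IsClique (A ∩ B)) (hcard : (A ∩ B).encard < k) (hHG : IsMinor H G) :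
    IsMinor H (G.induce A) ∨ IsMinor H (G.induce B) := by
  obtain ⟨f, hf, hdisj, hadj⟩ := hHG
  obtain ⟨X, hXcard, hX⟩ := exists_finset_card_lt_of_encard_lt hdisj hcard
  have hconn := hH.2 X hXcard
  obtain ⟨a₀⟩ := hconn.nonempty
  obtain ⟨u₀, hu₀⟩ := Set.nonempty_coe_sort.1 (hf a₀).nonempty
  wlog huA : u₀ ∈ A generalizing A B
  · rw [Set.inter_comm] at hclique hcard hX
    refine (this ((Set.union_comm B A).trans hcover) (fun b hb a ha h => hsep a ha b hb h.symm)
      hclique hcard hX ?_).symm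
    exact (hcover.ge (Set.mem_univ u₀)).resolve_left huA
  have hpure : ∀ a : ((X : Set α)ᶜ : Set α), f a ⊆ A \ B := by
    refine forall_of_connected_of_adj hconn (x := a₀) (fun a b hab ha => ?_)
      (subset_diff_of_connected (hf a₀) hcover hsep ((hX a₀).1 a₀.2) hu₀ huA)
    obtain ⟨u, hu, v, hv, huv⟩ := hadj a b hab
    refine subset_diff_of_connected (hf b) hcover hsep ((hX b).1 b.2) hv ?_
    by_contra hvA
    exact hsep u (ha hu) v ⟨(hcover.ge (Set.mem_univ v)).resolve_left hvA, hvA⟩ huv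
  refine .inl (isMinor_induce_of_branchSets (fun a ha b hb => hsep a ha b ⟨?_, hb⟩) hclique hf hdisj
    hadj fun a => or_iff_not_imp_left.2 fun ha => ?_)
  · exact (hcover.ge (Set.mem_univ b)).resolve_left hb
  · rw [← Set.not_disjoint_iff_nonempty_inter, not_not, ← hX] at ha
    exact (hpure ⟨a, ha⟩).trans Set.sdiff_subset

end CliqueSum

end Minors

section Planar

variable {V V' : Type*} {G : SimpleGraph V} {G' : SimpleGraph V'}

lemma IsPlanar.of_isMinor (hG : IsPlanar G) (h : IsMinor G' G) : IsPlanar G' :=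
  ⟨fun h5 => hG.1 (h5.trans h), fun h33 => hG.2 (h33.trans h)⟩

lemma IsPlanar.of_injective (hG : IsPlanar G) (φ : G' →g G) (hφ : Function.Injective φ) :
    IsPlanar G' :=
  hG.of_isMinor (isMinor_of_injective φ hφ)

lemma IsPlanar.mono {G₁ : SimpleGraph V} (hG : IsPlanar G) (hle : G₁ ≤ G) : IsPlanar G₁ :=
  hG.of_injective (.ofLE hle) Function.injective_id

lemma IsPlanar.induce (hG : IsPlanar G) (A : Set V) : IsPlanar (G.induce A) :=
  hG.of_injective (Embedding.induce A).toHom Subtype.val_injective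

lemma isPlanar_of_card_lt_five [Finite V] (hV : Nat.card V < 5) : IsPlanar G := by
  constructor <;> intro h <;> simpa using h.card_le.trans_lt hV

lemma isPlanar_bot : IsPlanar (⊥ : SimpleGraph V) := by
  constructor
  · rintro ⟨f, -, -, hadj⟩
    obtain ⟨u, -, v, -, huv⟩ := hadj 0 1 (by simp)
    exact huv
  · rintro ⟨f, -, -, hadj⟩
    obtain ⟨u, -, v, -, huv⟩ := hadj (.inl 0) (.inr 0) (by simp)
    exact huv

lemma isPlanar_of_cliqueSum {A B : Set V} (hA : IsPlanar (G.induce A)) (hB : IsPlanar (G.induce B))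
    (hcover : A ∪ B = Set.univ) (hsep : ∀ a ∈ A \ B, ∀ b ∈ B \ A, ¬ G.Adj a b)
    (hclique : G.IsClique (A ∩ B)) (hcard : (A ∩ B).encard ≤ 2) : IsPlanar G := by
  have hlt : (A ∩ B).encard < (3 : ℕ) := hcard.trans_lt (by norm_num)
  constructor <;> intro h
  · exact (h.induce_or_induce_of_cliqueSum (isKConnected_completeGraph (by simp))
      hcover hsep hclique hlt).elim hA.1 hB.1
  · exact (h.induce_or_induce_of_cliqueSum (isKConnected_completeBipartiteGraph (by simp)
      (by simp) (by simp)) hcover hsep hclique hlt).elim hA.2 hB.2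

lemma isPlanar_of_induce_compl {W : Set V} (hW : IsPlanar (G.induce W))
    (hWc : IsPlanar (G.induce Wᶜ)) (hsep : ∀ a ∈ W, ∀ b ∉ W, ¬ G.Adj a b) : IsPlanar G := by
  refine isPlanar_of_cliqueSum hW hWc (by simp) (fun a ha b hb => hsep a ha.1 b hb.1) ?_ ?_ <;>
    simp

lemma IsPlanar.of_deleteIncidenceSet {v u w : V} (hG : IsPlanar (G.deleteIncidenceSet v))
    (hv : ∀ z, G.Adj v z → z = u ∨ z = w) (huw : u = w ∨ G.Adj u w) : IsPlanar G := by
  classical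
  have hinter : {v}ᶜ ∩ insert v (G.neighborSet v) ⊆ (({u, w} : Finset V) : Set V) := by
    rintro z ⟨hzv, rfl | hz⟩
    · exact absurd rfl hzv
    · simpa using hv z hz
  refine isPlanar_of_cliqueSum (A := {v}ᶜ) (B := insert v (G.neighborSet v)) ?_ ?_ ?_ ?_ ?_ ?_
  · refine hG.of_injective ⟨Subtype.val, fun {a b} hab => ?_⟩ Subtype.val_injective
    exact deleteIncidenceSet_adj.2 ⟨hab, a.2, b.2⟩
  · have hsub : insert v (G.neighborSet v) ⊆ (({v, u, w} : Finset V) : Set V) := by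
      rintro z (rfl | hz)
      · simp
      · simpa using Or.inr (hv z hz)
    have := ((Finset.finite_toSet _).subset hsub).to_subtype
    refine isPlanar_of_card_lt_five ?_
    rw [Nat.card_coe_set_eq]
    refine (Set.ncard_le_ncard hsub).trans_lt ?_
    rw [Set.ncard_coe_finset]
    exact Finset.card_le_three.trans_lt (by norm_num)
  · grind
  · rintro a ⟨-, ha⟩ b ⟨-, hb⟩ hab
    obtain rfl : b = v := by simpa using hb
    exact ha (.inr hab.symm)
  · intro a ha b hb hab
    have := hinter ha
    have := hinter hb
    have := huw.imp_right Adj.symm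
    grind
  · refine (Set.encard_le_encard hinter).trans ?_
    rw [Set.encard_coe_eq_coe_finsetCard]
    exact_mod_cast Finset.card_le_two

lemma IsPlanar.sup_edge_of_not_reachable {x y : V} (hG : IsPlanar G) (hxy : ¬ G.Reachable x y) :
    IsPlanar (G ⊔ edge x y) := by
  obtain ⟨C, hx, hy, hC⟩ :
      ∃ C : Set V, x ∈ C ∧ y ∉ C ∧ ∀ a b, G.Adj a b → (a ∈ C ↔ b ∈ C) :=
    ⟨{z | G.Reachable x z}, Reachable.refl x, hxy, fun a b hab =>
      ⟨fun h => h.trans hab.reachable, fun h => h.trans hab.symm.reachable⟩⟩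
  have hinter : C ∩ insert x Cᶜ = {x} := by grind
  refine isPlanar_of_cliqueSum (A := C) (B := insert x Cᶜ) ?_ ?_ ?_ ?_ ?_ ?_
  · refine hG.of_injective ⟨Subtype.val, fun {a b} hab => ?_⟩ Subtype.val_injective
    simp only [comap_adj, sup_adj, edge_adj, Function.Embedding.subtype_apply] at hab
    grind
  · refine IsPlanar.of_deleteIncidenceSet (v := ⟨x, .inl rfl⟩) (u := ⟨y, .inr hy⟩)
      (w := ⟨y, .inr hy⟩) ?_ ?_ (.inl rfl)
    · refine hG.of_injective ⟨Subtype.val, fun {a b} hab => ?_⟩ Subtype.val_injective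
      simp only [deleteIncidenceSet_adj, comap_adj, sup_adj, edge_adj,
        Function.Embedding.subtype_apply] at hab
      grind
    · rintro ⟨z, hz⟩ hxz
      have := hxz.ne
      simp only [comap_adj, sup_adj, edge_adj, Function.Embedding.subtype_apply] at hxz
      grind
  · grind
  · intro a ha b hb hab
    simp only [sup_adj, edge_adj] at hab
    grind
  · simp [hinter]
  · simp [hinter]

lemma isPlanar_of_isAcyclic [Finite V] (hG : G.IsAcyclic) : IsPlanar G := by
  induction hk : G.edgeSet.ncard generalizing G with
  | zero =>
    rw [Set.ncard_eq_zero, edgeSet_eq_empty] at hk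
    exact hk ▸ isPlanar_bot
  | succ k ih =>
    obtain ⟨e, he⟩ := Set.nonempty_of_ncard_ne_zero (hk.trans_ne k.succ_ne_zero)
    induction e with | _ x y =>
    have hbridge := isBridge_iff.1 (isAcyclic_iff_forall_adj_isBridge.1 hG he)
    have hdel : IsPlanar (G.deleteEdges {s(x, y)}) :=
      ih (hG.anti (deleteEdges_le _)) (by
        rw [edgeSet_deleteEdges, Set.ncard_sdiff_singleton_of_mem he, hk, Nat.add_sub_cancel])
    refine (hdel.sup_edge_of_not_reachable hbridge).mono fun a b hab => ?_
    simp only [sup_adj, deleteEdges_adj, Set.mem_singleton_iff, edge_adj, Sym2.eq_iff]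
    have := hab.ne
    grind

/-- `G - v` together with the edge `uw` is obtained by contracting `uv`, and `v` comes back as an
isolated vertex. -/
lemma IsPlanar.suppress {v u w : V} (hG : IsPlanar G) (hu : G.Adj v u) (hw : G.Adj v w) :
    IsPlanar (G.deleteIncidenceSet v ⊔ edge u w) := by
  classical
  refine isPlanar_of_induce_compl (W := {v}) (isPlanar_of_card_lt_five (by simp)) ?_ ?_
  · let f (a : ({v}ᶜ : Set V)) : Set V := if (a : V) = u then {v, u} else {(a : V)}
    have hf (a) : (a : V) ∈ f a := by grind
    refine hG.of_isMinor ⟨f, fun a => ?_, fun a b hab => ?_, fun a b hab => ?_⟩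
    · by_cases ha : (a : V) = u
      · rw [show f a = {v, u} from if_pos ha]
        exact induce_pair_connected_of_adj hu
      · rw [show f a = {(a : V)} from if_neg ha]
        simp
    · refine Set.disjoint_left.2 fun z hza hzb => hab (Subtype.ext ?_)
      have := a.2
      have := b.2
      grind
    · simp only [comap_adj, sup_adj, deleteIncidenceSet_adj, edge_adj,
        Function.Embedding.subtype_apply] at hab
      obtain ⟨hab, -⟩ | ⟨⟨rfl, rfl⟩ | ⟨rfl, rfl⟩, -⟩ := hab
      · exact ⟨a, hf a, b, hf b, hab⟩
      · exact ⟨v, by simp [f], b, hf b, hw⟩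
      · exact ⟨a, hf a, v, by simp [f], hw.symm⟩
  · rintro a rfl b - hab
    simp only [sup_adj, deleteIncidenceSet_adj, edge_adj] at hab
    have := hu.ne
    have := hw.ne
    grind

lemma IsPlanar.of_suppress {v u w : V} (hG : IsPlanar (G.deleteIncidenceSet v ⊔ edge u w))
    (hv : ∀ z, G.Adj v z → z = u ∨ z = w) (hvu : v ≠ u) (hvw : v ≠ w) : IsPlanar G := by
  refine IsPlanar.mono (G := G ⊔ edge u w) ?_ le_sup_left
  refine IsPlanar.of_deleteIncidenceSet (v := v) (u := u) (w := w) (hG.mono fun a b hab => ?_) ?_ ?_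
  · simp only [sup_adj, deleteIncidenceSet_adj, edge_adj] at hab ⊢
    grind
  · intro z hz
    simp only [sup_adj, edge_adj] at hz
    grind
  · simp only [sup_adj, edge_adj]
    tauto

lemma vertexDegree_deleteIncidenceSet_sup_edge_le [Finite V] {v w x z : V} (hvw : G.Adj v w)
    (hzv : z ≠ v) (hzx : z ≠ x) :
    vertexDegree (G.deleteIncidenceSet v ⊔ edge x w) z ≤ vertexDegree G z := by
  by_cases hzw : z = w
  · subst hzw
    have hsub : (G.deleteIncidenceSet v ⊔ edge x z).neighborSet z ⊆
        insert x (G.neighborSet z \ {v}) := by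
      intro a ha
      simp only [mem_neighborSet, sup_adj, deleteIncidenceSet_adj, edge_adj] at ha
      simp only [Set.mem_insert_iff, Set.mem_sdiff, mem_neighborSet, Set.mem_singleton_iff]
      grind
    refine (Set.ncard_le_ncard hsub).trans ((Set.ncard_insert_le _ _).trans ?_)
    exact (Set.ncard_sdiff_singleton_add_one hvw.symm).le
  · refine Set.ncard_le_ncard fun a ha => ?_
    simp only [mem_neighborSet, sup_adj, deleteIncidenceSet_adj, edge_adj] at ha ⊢
    grind

lemma neighborSet_eq_pair [Finite V] {v u w : V} (hdeg : vertexDegree G v ≤ 2) (hu : G.Adj v u)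
    (hw : G.Adj v w) (huw : u ≠ w) : G.neighborSet v = {u, w} := by
  have hsub : {u, w} ⊆ G.neighborSet v := Set.insert_subset hu (Set.singleton_subset_iff.2 hw)
  refine (Set.eq_of_subset_of_ncard_le hsub ?_).symm
  rwa [Set.ncard_pair huw]

lemma mem_edgeSet_deleteIncidenceSet_of_mem_edges {v x y : V} {p : G.Walk x y} {e : Sym2 V}
    (he : e ∈ p.edges) (hv : v ∉ p.support) : e ∈ (G.deleteIncidenceSet v).edgeSet := by
  induction e with | _ a b =>
  exact deleteIncidenceSet_adj.2 ⟨p.adj_of_mem_edges he,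
    ne_of_mem_of_not_mem (p.fst_mem_support_of_mem_edges he) hv,
    ne_of_mem_of_not_mem (p.snd_mem_support_of_mem_edges he) hv⟩

/-- The interior vertices of the path are suppressed one after another. -/
lemma IsPlanar.sup_edge_of_isPath [Finite V] {x y : V} (hG : IsPlanar G) {p : G.Walk x y}
    (hp : p.IsPath) (hdeg : ∀ z ∈ p.support, z ≠ x → z ≠ y → vertexDegree G z ≤ 2) :
    IsPlanar (G ⊔ edge x y) := by
  induction hk : p.length generalizing G with
  | zero =>
    obtain rfl := p.eq_of_length_eq_zero hk
    rwa [edge_self_eq_bot, sup_bot_eq]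
  | succ k ih =>
    cases p with
    | nil => simp at hk
    | @cons _ v _ hxv p =>
    cases p with
    | nil => rwa [sup_edge_of_adj _ hxv]
    | @cons _ w _ hvw p =>
    simp only [Walk.cons_isPath_iff, Walk.support_cons, List.mem_cons, not_or] at hp hdeg
    obtain ⟨⟨hp, hvp⟩, hne, hxp⟩ := hp
    have hxw : x ≠ w := (ne_of_mem_of_not_mem p.start_mem_support hxp).symm
    have hyv : y ≠ v := ne_of_mem_of_not_mem p.end_mem_support hvp
    have hNv : G.neighborSet v = {x, w} :=
      neighborSet_eq_pair (hdeg v (by simp) hxv.ne' hyv.symm) hxv.symm hvw hxw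
    set R := G.deleteIncidenceSet v ⊔ edge x w
    have hpR : ∀ e ∈ p.edges, e ∈ R.edgeSet := fun e he =>
      edgeSet_mono le_sup_left (mem_edgeSet_deleteIncidenceSet_of_mem_edges he hvp)
    have hxwR : R.Adj x w := .inr (by simp [edge_adj, hxw])
    have hR : IsPlanar (R ⊔ edge x y) := by
      refine ih (p := .cons hxwR (p.transfer R hpR)) (hG.suppress hxv.symm hvw) ?_ ?_ ?_
      · simpa [hxp] using hp.transfer hpR
      · intro z hz hzx hzy
        have hzp : z ∈ p.support := by simpa [hzx] using hz
        have hzv : z ≠ v := ne_of_mem_of_not_mem hzp hvp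
        exact (vertexDegree_deleteIncidenceSet_sup_edge_le hvw hzv hzx).trans
          (hdeg z (.inr (.inr hzp)) hzx hzy)
      · simpa using hk
    refine IsPlanar.of_suppress (v := v) (u := x) (w := w) (hR.mono fun a b hab => ?_) ?_ hxv.ne'
      hvw.ne
    · simp only [R, sup_adj, deleteIncidenceSet_adj, edge_adj] at hab ⊢
      grind
    · intro z hz
      have : z ∈ G.neighborSet v ↔ z ∈ ({x, w} : Set V) := by rw [hNv]
      simp only [sup_adj, edge_adj] at hz
      grind [mem_neighborSet]

end Planar

section EdgeCount

variable {V : Type*} {G : SimpleGraph V}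

lemma edgeCount_eq_card_edgeFinset [Fintype G.edgeSet] : edgeCount G = G.edgeFinset.card := by
  rw [edgeCount, Set.ncard_eq_toFinset_card', edgeFinset]

lemma vertexDegree_eq_degree {v : V} [Fintype (G.neighborSet v)] :
    vertexDegree G v = G.degree v := by
  rw [vertexDegree, Set.ncard_eq_toFinset_card', degree, neighborFinset]

lemma edgeCount_sup_fromEdgeSet [Finite V] {e : Sym2 V} (he : ¬ e.IsDiag) (heG : e ∉ G.edgeSet) :
    edgeCount (G ⊔ fromEdgeSet {e}) = edgeCount G + 1 := by
  have hdiff : {e} \ Sym2.diagSet = ({e} : Set (Sym2 V)) := by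
    simpa [Set.disjoint_singleton_left] using he
  rw [edgeCount, edgeSet_sup, edgeSet_fromEdgeSet, hdiff, Set.union_singleton,
    Set.ncard_insert_of_notMem heG, edgeCount]

lemma edgeCount_deleteEdges_singleton [Finite V] {e : Sym2 V} (he : e ∈ G.edgeSet) :
    edgeCount (G.deleteEdges {e}) + 1 = edgeCount G := by
  rw [edgeCount, edgeSet_deleteEdges, Set.ncard_sdiff_singleton_add_one he, edgeCount]

lemma edgeCount_deleteIncidenceSet_add_vertexDegree [Finite V] (G : SimpleGraph V) (v : V) :
    edgeCount (G.deleteIncidenceSet v) + vertexDegree G v = edgeCount G := by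
  classical
  have := Fintype.ofFinite V
  rw [vertexDegree_eq_degree, edgeCount_eq_card_edgeFinset, edgeCount_eq_card_edgeFinset,
    card_edgeFinset_deleteIncidenceSet, Nat.sub_add_cancel (G.degree_le_card_edgeFinset v)]

lemma edgeCount_induce_compl_singleton [Finite V] (G : SimpleGraph V) (v : V) :
    edgeCount (G.induce {v}ᶜ) = edgeCount (G.deleteIncidenceSet v) := by
  classical
  have := Fintype.ofFinite V
  rw [edgeCount_eq_card_edgeFinset, edgeCount_eq_card_edgeFinset,
    card_edgeFinset_induce_compl_singleton]

lemma sum_vertexDegree [Fintype V] (G : SimpleGraph V) :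
    ∑ v, vertexDegree G v = 2 * edgeCount G := by
  classical
  rw [edgeCount_eq_card_edgeFinset, ← G.sum_degrees_eq_twice_card_edges]
  exact Finset.sum_congr rfl fun v _ => vertexDegree_eq_degree

end EdgeCount

section PendantReduction

universe u

variable {V U T : Type*} {G : SimpleGraph V} {R : SimpleGraph U} {S : SimpleGraph T}
  {ρ : V → U} {σ : U → T}

/-- `R` arises from `G` by deleting vertices of degree one, one after another, and `ρ` sends a
vertex of `G` to the vertex of `R` that carries the deleted tree containing it. Only the effect on
the number of edges and on planarity is recorded. -/
structure PendantReduction (G : SimpleGraph V) (R : SimpleGraph U) (ρ : V → U) : Prop where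
  surjective : Function.Surjective ρ
  edgeCount_add_card : edgeCount R + Nat.card V = edgeCount G + Nat.card U
  isPlanar : IsPlanar G → IsPlanar R
  isPlanar_sup_edge (x y : V) : IsPlanar (R ⊔ edge (ρ x) (ρ y)) → IsPlanar (G ⊔ edge x y)

lemma PendantReduction.refl (G : SimpleGraph V) : PendantReduction G G id :=
  ⟨Function.surjective_id, rfl, id, fun _ _ => id⟩

lemma PendantReduction.trans (hG : PendantReduction G R ρ) (hR : PendantReduction R S σ) :
    PendantReduction G S (σ ∘ ρ) where
  surjective := hR.surjective.comp hG.surjective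
  edgeCount_add_card := by
    have := hG.edgeCount_add_card
    have := hR.edgeCount_add_card
    omega
  isPlanar := hR.isPlanar ∘ hG.isPlanar
  isPlanar_sup_edge x y := hG.isPlanar_sup_edge x y ∘ hR.isPlanar_sup_edge (ρ x) (ρ y)

/-- In `G + xy + ρ(x)ρ(y)` the neighbours of `v` form a clique. -/
lemma isPlanar_sup_edge_of_induce_compl_singleton {v u : V} (huv : u ≠ v)
    (hv : ∀ z, G.Adj v z → z = u) {ρ : V → ({v}ᶜ : Set V)} (hρv : ρ v = u)
    (hρ : ∀ x ≠ v, ρ x = x) {x y : V}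
    (hxy : IsPlanar (G.induce {v}ᶜ ⊔ edge (ρ x) (ρ y))) : IsPlanar (G ⊔ edge x y) := by
  refine IsPlanar.mono (G := G ⊔ edge x y ⊔ edge (ρ x : V) (ρ y)) ?_ le_sup_left
  obtain ⟨w, hw, huw⟩ : ∃ w, (∀ z, (G ⊔ edge x y ⊔ edge (ρ x : V) (ρ y)).Adj v z → z = u ∨ z = w) ∧
      (u = w ∨ (G ⊔ edge x y ⊔ edge (ρ x : V) (ρ y)).Adj u w) := by
    have := (ρ x).2
    have := (ρ y).2
    simp only [sup_adj, edge_adj]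
    by_cases hx : x = v
    · exact ⟨ρ y, by grind, by grind⟩
    by_cases hy : y = v
    · exact ⟨ρ x, by grind, by grind⟩
    · exact ⟨u, by grind, .inl rfl⟩
  refine IsPlanar.of_deleteIncidenceSet (v := v) ?_ hw huw
  refine isPlanar_of_induce_compl (W := {v}) (isPlanar_of_card_lt_five (by simp))
    (hxy.mono fun a b hab => ?_) ?_
  · have := a.2
    have := b.2
    simp only [comap_adj, sup_adj, edge_adj, deleteIncidenceSet_adj,
      Function.Embedding.subtype_apply] at hab ⊢
    grind
  · rintro a rfl b - hab
    exact (deleteIncidenceSet_adj.1 hab).2.1 rfl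

lemma exists_pendantReduction_of_vertexDegree_eq_one [Finite V] {v : V}
    (hv : vertexDegree G v = 1) :
    ∃ ρ, PendantReduction G (G.induce {v}ᶜ) ρ := by
  classical
  obtain ⟨u, hu⟩ := Set.ncard_eq_one.1 hv
  have huv : G.Adj v u := by
    rw [← mem_neighborSet, hu]
    rfl
  have honly : ∀ z, G.Adj v z → z = u := fun z hz => by
    simpa [hu] using (G.mem_neighborSet v z).2 hz
  let ρ (x : V) : ({v}ᶜ : Set V) := if hx : x = v then ⟨u, huv.ne'⟩ else ⟨x, hx⟩
  refine ⟨ρ, fun x => ⟨x, dif_neg x.2⟩, ?_, (·.induce _), fun x y =>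
    isPlanar_sup_edge_of_induce_compl_singleton huv.ne' honly (by simp [ρ])
      fun x hx => by simp [ρ, hx]⟩
  have := edgeCount_induce_compl_singleton G v
  have := edgeCount_deleteIncidenceSet_add_vertexDegree G v
  have hcard : ({v}ᶜ : Set V).ncard + 1 = Nat.card V := by
    rw [← Set.ncard_singleton v, add_comm, Set.ncard_add_ncard_compl]
  rw [Nat.card_coe_set_eq]
  omega

lemma exists_pendantReduction {V : Type u} [Finite V] (G : SimpleGraph V) :
    ∃ (U : Type u) (_ : Finite U) (R : SimpleGraph U) (ρ : V → U),
      PendantReduction G R ρ ∧ ∀ u, vertexDegree R u ≠ 1 := by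
  induction hn : Nat.card V using Nat.strong_induction_on generalizing V with
  | _ n ih =>
    by_cases hdeg : ∀ v, vertexDegree G v ≠ 1
    · exact ⟨V, inferInstance, G, id, .refl G, hdeg⟩
    · push Not at hdeg
      obtain ⟨v, hv⟩ := hdeg
      obtain ⟨ρ, hρ⟩ := exists_pendantReduction_of_vertexDegree_eq_one hv
      have hlt : Nat.card ({v}ᶜ : Set V) < n := by
        rw [← hn, Nat.card_coe_set_eq]
        exact Set.ncard_lt_card (by simp)
      obtain ⟨U, hU, R, σ, hσ, hR⟩ := ih _ hlt (G.induce {v}ᶜ) rfl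
      exact ⟨U, hU, R, σ ∘ ρ, hρ.trans hσ, hR⟩

end PendantReduction

section Detach

variable {V : Type*} {G : SimpleGraph V}

/-- The graph `G` with all edges meeting `D` deleted, so that the vertices of `D` become isolated;
for a single vertex this is `G.deleteIncidenceSet v`. -/
def detach (G : SimpleGraph V) (D : Set V) : SimpleGraph V where
  Adj a b := G.Adj a b ∧ a ∉ D ∧ b ∉ D
  symm := ⟨fun _ _ h => ⟨h.1.symm, h.2.2, h.2.1⟩⟩
  loopless := ⟨fun _ h => G.irrefl h.1⟩

lemma detach_le (D : Set V) : detach G D ≤ G := fun _ _ h => h.1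

lemma connectedComponentMk_detach_eq_or_exists {D : Set V} {x y : V} (hxy : G.Reachable x y) :
    (detach G D).connectedComponentMk x = (detach G D).connectedComponentMk y ∨
      ∃ d ∈ D, ∃ z ∈ insert d (G.neighborSet d),
        (detach G D).connectedComponentMk z = (detach G D).connectedComponentMk x := by
  obtain ⟨p⟩ := hxy
  induction p with
  | nil => exact .inl rfl
  | @cons a b _ hab _ ih =>
    by_cases ha : a ∈ D
    · exact .inr ⟨a, ha, a, .inl rfl, rfl⟩
    by_cases hb : b ∈ D
    · exact .inr ⟨b, hb, a, .inr hab.symm, rfl⟩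
    have hadj : (detach G D).Adj a b := ⟨hab, ha, hb⟩
    rwa [ConnectedComponent.sound hadj.reachable]

lemma card_connectedComponent_detach_le [Finite V] (G : SimpleGraph V) (D : Finset V) :
    Nat.card (detach G D).ConnectedComponent ≤
      Nat.card G.ConnectedComponent + ∑ d ∈ D, (1 + vertexDegree G d) := by
  classical
  have := Fintype.ofFinite V
  let comp := (detach G D).connectedComponentMk
  have hcover : (Finset.univ : Finset (detach G D).ConnectedComponent) ⊆
      Finset.univ.image (fun c : G.ConnectedComponent => comp (Quot.out c)) ∪
        D.biUnion fun d => (insert d (G.neighborFinset d)).image comp := by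
    intro c _
    obtain ⟨x, rfl⟩ := c.exists_rep
    change comp x ∈ _
    have hreach : G.Reachable x (Quot.out (G.connectedComponentMk x)) :=
      ConnectedComponent.exact (Quot.out_eq (G.connectedComponentMk x)).symm
    simp only [Finset.mem_union, Finset.mem_image, Finset.mem_univ, true_and, Finset.mem_biUnion,
      Finset.mem_insert, mem_neighborFinset]
    exact (connectedComponentMk_detach_eq_or_exists hreach).imp (fun h => ⟨_, h.symm⟩) id
  rw [Nat.card_eq_fintype_card, Nat.card_eq_fintype_card, ← Finset.card_univ]
  refine (Finset.card_le_card hcover).trans ((Finset.card_union_le _ _).trans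
    (add_le_add Finset.card_image_le
      (Finset.card_biUnion_le.trans (Finset.sum_le_sum fun d _ => ?_))))
  refine Finset.card_image_le.trans ((Finset.card_insert_le _ _).trans_eq ?_)
  rw [add_comm, vertexDegree, Set.ncard_eq_toFinset_card']
  rfl

lemma card_filter_vertexDegree_eq_zero_le [Fintype V] (G : SimpleGraph V) :
    (Finset.univ.filter fun v => vertexDegree G v = 0).card ≤ Nat.card G.ConnectedComponent := by
  classical
  rw [Nat.card_eq_fintype_card, ← Finset.card_univ]
  refine Finset.card_le_card_of_injOn G.connectedComponentMk (fun _ _ => Finset.mem_univ _) ?_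
  intro v hv w _ hvw
  obtain ⟨p⟩ := ConnectedComponent.exact hvw
  cases p with
  | nil => rfl
  | cons h _ =>
    have hv0 : vertexDegree G v = 0 := (Finset.mem_filter.1 hv).2
    rw [vertexDegree, Set.ncard_eq_zero] at hv0
    exact (Set.eq_empty_iff_forall_notMem.1 hv0 _ h).elim

/-- By the handshake lemma, from `8 + (1 + d) ≤ 4 d` for `d ≥ 3` and `8 ≤ 4 d` for `d = 2`. -/
lemma sum_filter_three_le_vertexDegree_le [Fintype V] (hG : ∀ v, vertexDegree G v ≠ 1) {e : ℕ}
    (he : edgeCount G ≤ Fintype.card V + e) :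
    ∑ v with 3 ≤ vertexDegree G v, (1 + vertexDegree G v) ≤
      8 * e + 8 * Nat.card G.ConnectedComponent := by
  have hpointwise : ∀ v ∈ Finset.univ,
      8 + (if 3 ≤ vertexDegree G v then 1 + vertexDegree G v else 0) ≤
        4 * vertexDegree G v + (if vertexDegree G v = 0 then 8 else 0) := by
    intro v _
    have := hG v
    split_ifs <;> omega
  have hsum := Finset.sum_le_sum hpointwise
  rw [Finset.sum_add_distrib, Finset.sum_add_distrib, ← Finset.mul_sum, sum_vertexDegree,
    ← Finset.sum_filter, ← Finset.sum_filter, Finset.sum_const, Finset.sum_const, smul_eq_mul,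
    smul_eq_mul, Finset.card_univ] at hsum
  have := card_filter_vertexDegree_eq_zero_le G
  omega

lemma notMem_of_mem_support_detach {D : Set V} {x y z : V} (p : (detach G D).Walk x y)
    (hz : z ∈ p.support) (hzx : z ≠ x) : z ∉ D := by
  induction p with
  | nil => exact absurd (by simpa using hz) hzx
  | @cons _ b _ hab _ ih =>
    have hz := (List.mem_cons.1 hz).resolve_left hzx
    by_cases hzb : z = b
    · exact hzb ▸ hab.2.2
    · exact ih hz hzb

end Detach

section PlanarPairs

variable {V : Type*} {G : SimpleGraph V}

/-- The ordered pairs `(x, y)` for which `G + xy` is planar. This includes the pairs with `x = y`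
and those with `xy` an edge of `G` if `G` is planar. -/
def planarPairs (G : SimpleGraph V) : Set (V × V) :=
  {p | IsPlanar (G ⊔ edge p.1 p.2)}

lemma sq_card_le_card_mul_card_filter_eq {L : Type*} [Fintype V] [Fintype L] [DecidableEq L]
    (f : V → L) : Fintype.card V ^ 2 ≤
      Fintype.card L * (Finset.univ.filter fun p : V × V => f p.1 = f p.2).card := by
  have hV : Fintype.card V = ∑ c, (Finset.univ.filter fun x => f x = c).card :=
    Finset.card_eq_sum_card_fiberwise fun x _ => Finset.mem_coe.2 (Finset.mem_univ (f x))
  have hpairs : (Finset.univ.filter fun p : V × V => f p.1 = f p.2).card =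
      ∑ c, (Finset.univ.filter fun x => f x = c).card ^ 2 := by
    rw [Finset.card_eq_sum_card_fiberwise (f := fun p => f p.1) (t := Finset.univ)
      fun p _ => Finset.mem_coe.2 (Finset.mem_univ (f p.1))]
    refine Finset.sum_congr rfl fun c _ => ?_
    rw [sq, ← Finset.card_product]
    congr 1
    ext p
    simp only [Finset.mem_filter, Finset.mem_univ, true_and, Finset.mem_product]
    grind
  rw [hV, hpairs]
  exact sq_sum_le_card_mul_sum_sq

/-- Every vertex can be joined to a vertex of each other component of the reduced graph. -/
lemma PendantReduction.mul_card_le_ncard_planarPairs {U : Type*} [Finite V] [Finite U]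
    {R : SimpleGraph U} {ρ : V → U} (hR : PendantReduction G R ρ) (hG : IsPlanar G) :
    (Nat.card R.ConnectedComponent - 1) * Nat.card V ≤ (planarPairs G).ncard := by
  classical
  have := Fintype.ofFinite V
  have := Fintype.ofFinite U
  let comp (x : V) := R.connectedComponentMk (ρ x)
  have hcomp : Function.Surjective comp := Quot.mk_surjective.comp hR.surjective
  let pairs : Finset (Σ _ : V, R.ConnectedComponent) :=
    Finset.univ.sigma fun x => Finset.univ.erase (comp x)
  have hpairs : pairs.card = Nat.card V * (Nat.card R.ConnectedComponent - 1) := by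
    simp [pairs, Finset.card_erase_of_mem]
  rw [mul_comm, ← hpairs, ← Set.ncard_coe_finset]
  refine Set.ncard_le_ncard_of_injOn (fun p => (p.1, Function.surjInv hcomp p.2)) ?_ ?_
  · rintro ⟨x, c⟩ hp
    have hne : c ≠ comp x := Finset.ne_of_mem_erase (Finset.mem_sigma.1 hp).2
    refine hR.isPlanar_sup_edge _ _ ((hR.isPlanar hG).sup_edge_of_not_reachable fun hreach => ?_)
    exact hne ((Function.surjInv_eq hcomp c).symm.trans (ConnectedComponent.sound hreach).symm)
  · rintro ⟨x, c⟩ - ⟨x', c'⟩ - heq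
    obtain ⟨rfl, heq⟩ := Prod.mk.inj heq
    exact congrArg _ (Function.injective_surjInv hcomp heq)

/-- The components of a graph without its vertices of degree at least three are paths and cycles
of vertices of degree at most two. -/
lemma IsPlanar.sup_edge_of_reachable_detach [Finite V] (hG : IsPlanar G) {D : Set V}
    (hD : ∀ z ∉ D, vertexDegree G z ≤ 2) {x y : V} (hxy : (detach G D).Reachable x y) :
    IsPlanar (G ⊔ edge x y) := by
  obtain ⟨p, hp⟩ := hxy.exists_isPath
  refine hG.sup_edge_of_isPath (hp.mapLe (detach_le D)) fun z hz hzx _ => hD z ?_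
  rw [Walk.support_mapLe_eq_support] at hz
  exact notMem_of_mem_support_detach p hz hzx

lemma PendantReduction.sq_card_le_mul_ncard_planarPairs {U : Type*} [Finite V] [Finite U]
    {R : SimpleGraph U} {ρ : V → U} (hR : PendantReduction G R ρ) (hG : IsPlanar G)
    (hdeg : ∀ u, vertexDegree R u ≠ 1) {e : ℕ} (he : edgeCount G ≤ Nat.card V + e) :
    Nat.card V ^ 2 ≤
      (8 * e + 9 * Nat.card R.ConnectedComponent) * (planarPairs G).ncard := by
  classical
  have := Fintype.ofFinite V
  have := Fintype.ofFinite U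
  let D : Finset U := Finset.univ.filter fun u => 3 ≤ vertexDegree R u
  have hcard : Nat.card (detach R D).ConnectedComponent ≤
      8 * e + 9 * Nat.card R.ConnectedComponent := by
    have hRe : edgeCount R ≤ Fintype.card U + e := by
      have := hR.edgeCount_add_card
      rw [← Nat.card_eq_fintype_card]
      omega
    have := card_connectedComponent_detach_le R D
    have : ∑ d ∈ D, (1 + vertexDegree R d) ≤ 8 * e + 8 * Nat.card R.ConnectedComponent :=
      sum_filter_three_le_vertexDegree_le hdeg hRe
    omega
  let piece (x : V) := (detach R D).connectedComponentMk (ρ x)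
  have hsame : ((Finset.univ.filter fun p : V × V => piece p.1 = piece p.2 : Finset (V × V)) :
      Set (V × V)) ⊆ planarPairs G := by
    rintro ⟨x, y⟩ hxy
    refine hR.isPlanar_sup_edge x y ((hR.isPlanar hG).sup_edge_of_reachable_detach (D := D) ?_
      (ConnectedComponent.exact (Finset.mem_filter.1 hxy).2))
    intro z hz
    simpa [D, Nat.lt_succ_iff] using hz
  have hpairs := Set.ncard_le_ncard hsame
  rw [Set.ncard_coe_finset] at hpairs
  rw [Nat.card_eq_fintype_card]
  refine (sq_card_le_card_mul_card_filter_eq piece).trans (Nat.mul_le_mul ?_ hpairs)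
  rwa [← Nat.card_eq_fintype_card]

lemma ncard_setOf_mk_mem_le [Finite V] (T : Set (Sym2 V)) :
    {p : V × V | s(p.1, p.2) ∈ T}.ncard ≤ 2 * T.ncard := by
  have hsub : {p : V × V | s(p.1, p.2) ∈ T} ⊆
      Quot.out '' T ∪ (fun e => (Quot.out e).swap) '' T := by
    rintro ⟨x, y⟩ hxy
    have hout : s((Quot.out s(x, y)).1, (Quot.out s(x, y)).2) = s(x, y) := Quot.out_eq s(x, y)
    rcases Sym2.eq_iff.1 hout with h | h
    · exact .inl ⟨_, hxy, Prod.ext h.1 h.2⟩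
    · exact .inr ⟨_, hxy, Prod.ext h.2 h.1⟩
  refine (Set.ncard_le_ncard hsub).trans ((Set.ncard_union_le _ _).trans ?_)
  rw [two_mul]
  exact add_le_add Set.ncard_image_le Set.ncard_image_le

lemma ncard_planarPairs_le [Finite V] (G : SimpleGraph V) :
    (planarPairs G).ncard ≤ Nat.card V + 2 * edgeCount G + 2 * (addableSet G).ncard := by
  have hsub : planarPairs G ⊆ (Set.range fun x : V => (x, x)) ∪
      {p | s(p.1, p.2) ∈ G.edgeSet} ∪ {p | s(p.1, p.2) ∈ addableSet G} := by
    rintro ⟨x, y⟩ hxy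
    by_cases heq : x = y
    · exact .inl (.inl ⟨x, by rw [heq]⟩)
    by_cases hadj : s(x, y) ∈ G.edgeSet
    · exact .inl (.inr hadj)
    · exact .inr ⟨by simpa using heq, hadj, hxy⟩
  refine (Set.ncard_le_ncard hsub).trans ((Set.ncard_union_le _ _).trans (add_le_add
    ((Set.ncard_union_le _ _).trans (add_le_add ?_ ?_)) ?_))
  · rw [← Set.image_univ, ← Set.ncard_univ]
    exact Set.ncard_image_le
  · exact ncard_setOf_mk_mem_le G.edgeSet
  · exact ncard_setOf_mk_mem_le (addableSet G)

lemma IsPlanar.mul_card_le_ncard_planarPairs [Finite V] (hG : IsPlanar G) {e q : ℕ}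
    (he : edgeCount G ≤ Nat.card V + e) (hq : (8 * e + 9 * q) * q ≤ Nat.card V) :
    q * Nat.card V ≤ (planarPairs G).ncard := by
  obtain ⟨U, _, R, ρ, hR, hdeg⟩ := exists_pendantReduction G
  by_cases hmany : q < Nat.card R.ConnectedComponent
  · exact (Nat.mul_le_mul_right _ (by omega)).trans (hR.mul_card_le_ncard_planarPairs hG)
  by_contra! hlt
  have hq0 : 0 < q := Nat.pos_of_mul_pos_right (Nat.zero_lt_of_lt hlt)
  refine lt_irrefl (Nat.card V ^ 2) ?_
  calc Nat.card V ^ 2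
      ≤ (8 * e + 9 * Nat.card R.ConnectedComponent) * (planarPairs G).ncard :=
        hR.sq_card_le_mul_ncard_planarPairs hG hdeg he
    _ ≤ (8 * e + 9 * q) * (planarPairs G).ncard := Nat.mul_le_mul_right _ (by omega)
    _ < (8 * e + 9 * q) * (q * Nat.card V) := Nat.mul_lt_mul_of_pos_left hlt (by omega)
    _ = (8 * e + 9 * q) * q * Nat.card V := (mul_assoc _ _ _).symm
    _ ≤ Nat.card V * Nat.card V := Nat.mul_le_mul_right _ hq
    _ = Nat.card V ^ 2 := (sq _).symm

lemma IsPlanar.mul_card_le_ncard_addableSet [Finite V] (hG : IsPlanar G) {K : ℕ}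
    (he : 16 * (2 * K + 5) * (edgeCount G - Nat.card V) ≤ Nat.card V)
    (hV : 18 * (2 * K + 5) ^ 2 ≤ Nat.card V) : K * Nat.card V ≤ (addableSet G).ncard := by
  have hpairs : (2 * K + 5) * Nat.card V ≤ (planarPairs G).ncard :=
    hG.mul_card_le_ncard_planarPairs (e := edgeCount G - Nat.card V) (by omega) (by linarith)
  have := ncard_planarPairs_le G
  have hexcess : edgeCount G - Nat.card V ≤ Nat.card V :=
    (Nat.le_mul_of_pos_left _ (by positivity)).trans he
  have : edgeCount G ≤ 2 * Nat.card V := by omega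
  linarith

end PlanarPairs

lemma exists_eventually_mul_le_ncard_addableSet (K : ℕ) :
    ∃ ε : ℝ, 0 < ε ∧ ∀ᶠ n : ℕ in atTop, ∀ G : SimpleGraph (Fin n), IsPlanar G →
      (edgeCount G : ℝ) ≤ (1 + ε) * n → K * n ≤ (addableSet G).ncard := by
  refine ⟨1 / (16 * (2 * K + 5)), by positivity, ?_⟩
  filter_upwards [eventually_ge_atTop (18 * (2 * K + 5) ^ 2)] with n hn G hG he
  have hexcess : 16 * (2 * K + 5) * (edgeCount G - n) ≤ n := by
    rcases le_total (edgeCount G) n with hle | hle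
    · simp [Nat.sub_eq_zero_of_le hle]
    · rw [← Nat.cast_le (α := ℝ)]
      push_cast [Nat.cast_sub hle]
      field_simp at he
      linarith
  simpa using hG.mul_card_le_ncard_addableSet (K := K) (by simpa using hexcess) (by simpa using hn)

section OrderComponents

variable {V : Type*}

lemma IsComponent.congr {G G' : SimpleGraph V} {W : Finset V}
    (h : ∀ a ∈ W, ∀ b, G.Adj a b ↔ G'.Adj a b) (hG : IsComponent G W) : IsComponent G' W := by
  have hind : G.induce (W : Set V) = G'.induce (W : Set V) := by
    ext a b
    exact h a a.2 b
  exact ⟨hind ▸ hG.1, fun v hv u hu => hG.2 v hv u ((h v hv u).2 hu)⟩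

lemma IsComponent.mem_iff_reachable {G : SimpleGraph V} {W : Finset V} (hW : IsComponent G W)
    {u x : V} (hu : u ∈ W) : x ∈ W ↔ G.Reachable u x := by
  constructor
  · intro hx
    exact (hW.1.preconnected ⟨u, hu⟩ ⟨x, hx⟩).map (Embedding.induce (W : Set V)).toHom
  · rintro ⟨p⟩
    induction p with
    | nil => exact hu
    | cons hadj _ ih => exact ih (hW.2 _ hu _ hadj)

variable {h n : ℕ} {H : SimpleGraph (Fin h)} {G G' : SimpleGraph (Fin n)}

lemma IsOrderCopy.congr {W : Finset (Fin n)} (h : ∀ a ∈ W, ∀ b, G.Adj a b ↔ G'.Adj a b)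
    (hG : IsOrderCopy H G W) : IsOrderCopy H G' W :=
  ⟨hG.1, fun i j => (hG.2 i j).trans (h _ (W.orderIsoOfFin hG.1 i).2 _)⟩

/-- Every component of `G'` that is not one of `G` meets `U`. -/
lemma numOrderComponents_le_add_card {U : Finset (Fin n)}
    (hU : ∀ a ∉ U, ∀ b, G.Adj a b ↔ G'.Adj a b) :
    numOrderComponents H G' ≤ numOrderComponents H G + U.card := by
  classical
  have hsub : {W : Finset (Fin n) | IsComponent G' W ∧ IsOrderCopy H G' W} ⊆
      {W : Finset (Fin n) | IsComponent G W ∧ IsOrderCopy H G W} ∪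
        (U.image fun u => Finset.univ.filter (G'.Reachable u) : Finset (Finset (Fin n))) := by
    rintro W ⟨hcomp, hcopy⟩
    by_cases hd : ∃ u ∈ U, u ∈ W
    · obtain ⟨u, hu, huW⟩ := hd
      refine .inr (Finset.mem_coe.2 (Finset.mem_image.2 ⟨u, hu, ?_⟩))
      ext x
      simp only [Finset.mem_filter, Finset.mem_univ, true_and, hcomp.mem_iff_reachable huW]
    · have hsame : ∀ a ∈ W, ∀ b, G'.Adj a b ↔ G.Adj a b :=
        fun a ha b => (hU a (fun haU => hd ⟨a, haU, ha⟩) b).symm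
      exact .inl ⟨hcomp.congr hsame, hcopy.congr hsame⟩
  refine (Set.ncard_le_ncard hsub).trans ((Set.ncard_union_le _ _).trans ?_)
  rw [Set.ncard_coe_finset]
  exact Nat.add_le_add_left Finset.card_image_le _

lemma numOrderComponents_sup_le {F : SimpleGraph (Fin n)} {U : Finset (Fin n)}
    (hF : ∀ a b, F.Adj a b → a ∈ U) :
    numOrderComponents H (G ⊔ F) ≤ numOrderComponents H G + U.card :=
  numOrderComponents_le_add_card fun a ha b =>
    ⟨.inl, fun hab => hab.resolve_right fun hF' => ha (hF a b hF')⟩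

end OrderComponents

section DoubleCounting

/-- Double counting of the pairs of an `x ∈ S` and a move `p` at `x`: a pair is determined by the
resulting element of `T` together with one of at most `b` hints. -/
lemma card_mul_le_card_mul_of_undo {α β γ δ : Type*} {S : Finset α} {T : Finset β} {a b : ℕ}
    (moves : α → Finset γ) (result : α → γ → β) (hints : β → Finset δ) (undo : β → δ → α × γ)
    (hmoves : ∀ x ∈ S, a ≤ (moves x).card) (hresult : ∀ x ∈ S, ∀ p ∈ moves x, result x p ∈ T)
    (hhints : ∀ y ∈ T, (hints y).card ≤ b)
    (hundo : ∀ x ∈ S, ∀ p ∈ moves x, ∃ q ∈ hints (result x p), undo (result x p) q = (x, p)) :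
    S.card * a ≤ T.card * b := by
  classical
  have hcover : S.sigma moves ⊆
      (T.sigma hints).image fun z => ⟨(undo z.1 z.2).1, (undo z.1 z.2).2⟩ := by
    rintro ⟨x, p⟩ hxp
    obtain ⟨hx, hp⟩ := Finset.mem_sigma.1 hxp
    obtain ⟨q, hq, heq⟩ := hundo x hx p hp
    refine Finset.mem_image.2 ⟨⟨result x p, q⟩, Finset.mem_sigma.2 ⟨hresult x hx p hp, hq⟩, ?_⟩
    simp only [heq]
  calc S.card * a ≤ (S.sigma moves).card := by
        rw [Finset.card_sigma, ← smul_eq_mul]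
        exact Finset.card_nsmul_le_sum _ _ _ hmoves
    _ ≤ (T.sigma hints).card := (Finset.card_le_card hcover).trans Finset.card_image_le
    _ ≤ T.card * b := by
        rw [Finset.card_sigma, ← smul_eq_mul]
        exact Finset.sum_le_card_nsmul _ _ _ hhints

end DoubleCounting

section MarkedGraphs

variable {h n : ℕ} {H : SimpleGraph (Fin h)} {i M s : ℕ}

open Classical in
/-- The pairs `(G, W)` of a planar graph `G` with `M` edges and at most `s` components that are
order-preserving copies of `H`, and a set `W` of `i` isolated vertices of `G`. -/
noncomputable def markedGraphs (H : SimpleGraph (Fin h)) (n i M s : ℕ) :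
    Finset (SimpleGraph (Fin n) × Finset (Fin n)) :=
  Finset.univ.filter fun x => IsPlanar x.1 ∧ edgeCount x.1 = M ∧ numOrderComponents H x.1 ≤ s ∧
    x.2.card = i ∧ ∀ v ∈ x.2, ∀ t, ¬ x.1.Adj v t

lemma mem_markedGraphs {G : SimpleGraph (Fin n)} {W : Finset (Fin n)} :
    (G, W) ∈ markedGraphs H n i M s ↔ IsPlanar G ∧ edgeCount G = M ∧
      numOrderComponents H G ≤ s ∧ W.card = i ∧ ∀ v ∈ W, ∀ t, ¬ G.Adj v t := by
  simp only [markedGraphs, Finset.mem_filter, Finset.mem_univ, true_and]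

lemma mem_markedGraphs_zero {G : SimpleGraph (Fin n)} {W : Finset (Fin n)} :
    (G, W) ∈ markedGraphs H n 0 M s ↔
      IsPlanar G ∧ edgeCount G = M ∧ numOrderComponents H G ≤ s ∧ W = ∅ := by
  rw [mem_markedGraphs, Finset.card_eq_zero]
  grind

lemma card_markedGraphs_zero (H : SimpleGraph (Fin h)) (n m s : ℕ) :
    (markedGraphs H n 0 m s).card =
      {G ∈ planarSet n m | numOrderComponents H G ≤ s}.ncard := by
  have himage : (markedGraphs H n 0 m s : Set (SimpleGraph (Fin n) × Finset (Fin n))) =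
      (fun G => (G, ∅)) '' {G ∈ planarSet n m | numOrderComponents H G ≤ s} := by
    ext ⟨G, W⟩
    simp only [Finset.mem_coe, mem_markedGraphs_zero, planarSet, Set.mem_image, Prod.mk.injEq,
      Set.mem_ofPred_eq]
    grind
  rw [← Set.ncard_coe_finset, himage,
    Set.ncard_image_of_injective _ fun _ _ heq => (Prod.mk.inj heq).1]

lemma addMin_le {m : ℕ} {G : SimpleGraph (Fin n)} (hG : G ∈ planarSet n m) :
    addMin n m ≤ (addableSet G).ncard :=
  Nat.sInf_le ⟨G, hG, rfl⟩

lemma card_toFinset_sym2_le_two {V : Type*} [DecidableEq V] (e : Sym2 V) :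
    e.toFinset.card ≤ 2 := by
  rw [Sym2.card_toFinset]
  split_ifs <;> omega

lemma card_markedGraphs_mul_addMin_le (H : SimpleGraph (Fin h)) (n m s : ℕ) :
    (markedGraphs H n 0 m s).card * addMin n m ≤
      (markedGraphs H n 0 (m + 1) (s + 2)).card * (m + 1) := by
  classical
  refine card_mul_le_card_mul_of_undo (fun x => (addableSet x.1).toFinset)
    (fun x e => (x.1 ⊔ fromEdgeSet {e}, x.2)) (fun y => y.1.edgeFinset)
    (fun y e => ((y.1 \ fromEdgeSet {e}, y.2), e)) ?_ ?_ ?_ ?_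
  · rintro ⟨G, W⟩ hx
    obtain ⟨hG, hm, -⟩ := mem_markedGraphs.1 hx
    rw [← Set.ncard_eq_toFinset_card']
    exact addMin_le ⟨hG, hm⟩
  · rintro ⟨G, W⟩ hx e he
    obtain ⟨-, rfl, hs, hW⟩ := mem_markedGraphs_zero.1 hx
    obtain ⟨hdiag, heG, hplanar⟩ := Set.mem_toFinset.1 he
    refine mem_markedGraphs_zero.2 ⟨hplanar, edgeCount_sup_fromEdgeSet hdiag heG, ?_, hW⟩
    refine (numOrderComponents_sup_le (U := e.toFinset) ?_).trans
      (Nat.add_le_add hs (card_toFinset_sym2_le_two e))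
    intro a b hab
    rw [Sym2.mem_toFinset, ← ((fromEdgeSet_adj _).1 hab).1]
    exact Sym2.mem_mk_left a b
  · rintro ⟨G, W⟩ hy
    rw [← edgeCount_eq_card_edgeFinset]
    exact (mem_markedGraphs.1 hy).2.1.le
  · rintro ⟨G, W⟩ - e he
    obtain ⟨hdiag, heG, -⟩ := Set.mem_toFinset.1 he
    refine ⟨e, by simp [hdiag], ?_⟩
    have hdisj : Disjoint G (fromEdgeSet {e}) := by simpa using heG
    simp only [hdisj.sup_sdiff_cancel_right]

end MarkedGraphs

section Planting

variable {h n : ℕ} {H : SimpleGraph (Fin h)} {G : SimpleGraph (Fin n)} {W : Finset (Fin n)}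

/-- The image of `H` under the increasing bijection onto `W`, without edges if `W` does not have
exactly `h` elements. -/
noncomputable def plantedCopy (H : SimpleGraph (Fin h)) (W : Finset (Fin n)) :
    SimpleGraph (Fin n) :=
  ⨆ hW : W.card = h, H.map (W.orderEmbOfFin hW).toEmbedding

lemma plantedCopy_eq_map (hW : W.card = h) :
    plantedCopy H W = H.map (W.orderEmbOfFin hW).toEmbedding :=
  iSup_pos hW

lemma mem_of_plantedCopy_adj {a b : Fin n} (hab : (plantedCopy H W).Adj a b) : a ∈ W := by
  obtain ⟨hW, hab⟩ := iSup_adj.1 hab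
  obtain ⟨i, -, -, rfl, -⟩ := (map_adj ..).1 hab
  exact W.orderEmbOfFin_mem hW i

lemma edgeCount_plantedCopy (hW : W.card = h) : edgeCount (plantedCopy H W) = edgeCount H := by
  rw [plantedCopy_eq_map hW, edgeCount, edgeSet_map,
    Set.ncard_image_of_injective _ (Function.Embedding.injective _), edgeCount]

lemma disjoint_plantedCopy (hiso : ∀ v ∈ W, ∀ t, ¬ G.Adj v t) : Disjoint G (plantedCopy H W) := by
  rw [disjoint_left]
  exact fun a b hG hF => hiso a (mem_of_plantedCopy_adj hF) b hG

lemma edgeCount_sup_plantedCopy (hW : W.card = h) (hiso : ∀ v ∈ W, ∀ t, ¬ G.Adj v t) :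
    edgeCount (G ⊔ plantedCopy H W) = edgeCount G + edgeCount H := by
  rw [← edgeCount_plantedCopy hW, edgeCount, edgeSet_sup,
    Set.ncard_union_eq (disjoint_edgeSet.2 (disjoint_plantedCopy hiso)), edgeCount, edgeCount]

lemma isOrderCopy_sup_plantedCopy (hW : W.card = h) (hiso : ∀ v ∈ W, ∀ t, ¬ G.Adj v t) :
    IsOrderCopy H (G ⊔ plantedCopy H W) W := by
  refine ⟨hW, fun i j => ?_⟩
  rw [sup_adj, or_iff_right (hiso _ (W.orderIsoOfFin hW i).2 _), plantedCopy_eq_map hW]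
  exact (map_adj_apply (f := (W.orderEmbOfFin hW).toEmbedding)).symm

lemma IsOrderCopy.nonempty_iso_induce (hcopy : IsOrderCopy H G W) :
    Nonempty (H ≃g G.induce (W : Set (Fin n))) :=
  ⟨{ toEquiv := (W.orderIsoOfFin hcopy.1).toEquiv
     map_rel_iff' := fun {i j} => (hcopy.2 i j).symm }⟩

lemma isComponent_sup_plantedCopy (hH : H.Connected) (hW : W.card = h)
    (hiso : ∀ v ∈ W, ∀ t, ¬ G.Adj v t) : IsComponent (G ⊔ plantedCopy H W) W := by
  obtain ⟨iso⟩ := (isOrderCopy_sup_plantedCopy (H := H) hW hiso).nonempty_iso_induce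
  exact ⟨iso.connected_iff.1 hH, fun v hv _ hvu =>
    mem_of_plantedCopy_adj (hvu.resolve_left (hiso v hv _)).symm⟩

lemma IsPlanar.sup_plantedCopy (hG : IsPlanar G) (hH : IsPlanar H) (hW : W.card = h)
    (hiso : ∀ v ∈ W, ∀ t, ¬ G.Adj v t) : IsPlanar (G ⊔ plantedCopy H W) := by
  refine isPlanar_of_induce_compl (W := (W : Set (Fin n))) ?_ ?_ ?_
  · obtain ⟨iso⟩ := (isOrderCopy_sup_plantedCopy (H := H) hW hiso).nonempty_iso_induce
    exact hH.of_injective iso.symm.toHom iso.symm.injective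
  · refine (hG.induce (W : Set (Fin n))ᶜ).mono ?_
    rintro ⟨a, ha⟩ b (hab | hab)
    · exact hab
    · exact absurd (mem_of_plantedCopy_adj hab) ha
  · rintro a ha b hb (hab | hab)
    · exact hiso a ha b hab
    · exact hb (mem_of_plantedCopy_adj hab.symm)

lemma card_markedGraphs_le_mul_plant (H : SimpleGraph (Fin h)) (hH : H.IsTree) (n M s : ℕ) :
    (markedGraphs H n h M s).card ≤
      (markedGraphs H n 0 (M + (h - 1)) (s + h)).card * (s + h) := by
  classical
  have hedges : edgeCount H = h - 1 := by
    have := hH.card_edgeFinset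
    rw [← edgeCount_eq_card_edgeFinset, Fintype.card_fin] at this
    omega
  rw [← mul_one (markedGraphs H n h M s).card]
  refine card_mul_le_card_mul_of_undo (fun _ => {()}) (fun x _ => (x.1 ⊔ plantedCopy H x.2, ∅))
    (fun y => {W : Finset (Fin n) | IsComponent y.1 W ∧ IsOrderCopy H y.1 W}.toFinset)
    (fun y W => ((y.1 \ plantedCopy H W, W), ())) (fun _ _ => le_rfl) ?_ ?_ ?_
  · rintro ⟨G, W⟩ hx - -
    obtain ⟨hG, rfl, hs, hW, hiso⟩ := mem_markedGraphs.1 hx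
    refine mem_markedGraphs_zero.2 ⟨hG.sup_plantedCopy (isPlanar_of_isAcyclic hH.isAcyclic) hW hiso,
      by rw [edgeCount_sup_plantedCopy hW hiso, hedges], ?_, rfl⟩
    exact (numOrderComponents_sup_le fun _ _ => mem_of_plantedCopy_adj).trans
      (add_le_add hs hW.le)
  · rintro ⟨G, W⟩ hy
    rw [← Set.ncard_eq_toFinset_card']
    exact (mem_markedGraphs.1 hy).2.2.1
  · rintro ⟨G, W⟩ hx - -
    obtain ⟨-, -, -, hW, hiso⟩ := mem_markedGraphs.1 hx
    refine ⟨W, Set.mem_toFinset.2 ⟨isComponent_sup_plantedCopy hH.connected hW hiso,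
      isOrderCopy_sup_plantedCopy hW hiso⟩, ?_⟩
    simp only [(disjoint_plantedCopy hiso).sup_sdiff_cancel_right]

end Planting

section IsolatingSwap

variable {n : ℕ} {G A B : SimpleGraph (Fin n)} {W : Finset (Fin n)} {v : Fin n}
  {e f g : Sym2 (Fin n)}

/-- Replacing the edges of `A` by those of `B` turns the planar graph `G` into a planar graph with
one edge less, in which `v` is isolated, as are the vertices of `W`. Only boundedly many vertices
are affected. -/
structure IsolatingSwap (G : SimpleGraph (Fin n)) (W : Finset (Fin n)) (v : Fin n)
    (A B : SimpleGraph (Fin n)) : Prop where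
  notMem : v ∉ W
  le : A ≤ G
  disjoint : Disjoint (G \ A) B
  isPlanar : IsPlanar (G \ A ⊔ B)
  edgeCount_add_one : edgeCount (G \ A ⊔ B) + 1 = edgeCount G
  not_adj : ∀ a ∈ insert v W, ∀ t, ¬ (G \ A ⊔ B).Adj a t
  exists_unaffected : ∃ U : Finset (Fin n), U.card ≤ 5 ∧
    ∀ a ∉ U, ∀ t, G.Adj a t ↔ (G \ A ⊔ B).Adj a t

lemma IsolatingSwap.undo (hswap : IsolatingSwap G W v A B) : (G \ A ⊔ B) \ B ⊔ A = G := by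
  rw [hswap.disjoint.sup_sdiff_cancel_right, sdiff_sup_cancel hswap.le]

lemma isolatingSwap_deleteEdge (hG : IsPlanar G) (hW : ∀ a ∈ W, ∀ t, ¬ G.Adj a t) (hvW : v ∉ W)
    (hf : f ∈ G.edgeSet) (hv : ∀ t, G.Adj v t → s(v, t) = f) :
    IsolatingSwap G W v (fromEdgeSet {f}) ⊥ where
  notMem := hvW
  le := by
    rw [fromEdgeSet_le]
    exact Set.sdiff_subset.trans (Set.singleton_subset_iff.2 hf)
  disjoint := disjoint_bot_right
  isPlanar := by
    rw [sup_bot_eq]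
    exact hG.mono sdiff_le
  edgeCount_add_one := by
    rw [sup_bot_eq]
    exact edgeCount_deleteEdges_singleton hf
  not_adj := by
    simp only [sup_bot_eq, sdiff_adj, fromEdgeSet_adj, Set.mem_singleton_iff, Finset.mem_insert]
    grind [SimpleGraph.Adj.ne]
  exists_unaffected := by
    refine ⟨f.toFinset, (card_toFinset_sym2_le_two f).trans (by decide), fun a ha t => ?_⟩
    simp only [sup_bot_eq, sdiff_adj, fromEdgeSet_adj, Set.mem_singleton_iff]
    grind [Sym2.mem_toFinset]

/-- The edges from `v` to the members of `e`. -/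
def spokes (v : Fin n) (e : Sym2 (Fin n)) : SimpleGraph (Fin n) :=
  fromEdgeSet ((fun u => s(v, u)) '' e)

lemma spokes_eq_fromEdgeSet_incidenceSet (hN : G.neighborSet v = e) :
    spokes v e = fromEdgeSet (G.incidenceSet v) := by
  rw [spokes, ← hN]
  congr 1
  ext f
  induction f with | _ a b =>
  simp only [Set.mem_image, mem_neighborSet, mk'_mem_incidenceSet_iff, Sym2.eq_iff]
  grind [SimpleGraph.adj_comm]

lemma sdiff_spokes (hN : G.neighborSet v = e) : G \ spokes v e = G.deleteIncidenceSet v := by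
  rw [spokes_eq_fromEdgeSet_incidenceSet hN]
  rfl

lemma vertexDegree_eq_two (he : ¬ e.IsDiag) (hN : G.neighborSet v = e) : vertexDegree G v = 2 := by
  induction e with | _ u w =>
  rw [vertexDegree, hN, Sym2.coe_mk, Set.ncard_pair (by simpa using he)]

lemma isolatingSwap_rewire (hW : ∀ a ∈ W, ∀ t, ¬ G.Adj a t) (he : ¬ e.IsDiag)
    (hN : G.neighborSet v = e) (hg : g ∈ addableSet (G.deleteIncidenceSet v))
    (hgW : ∀ a ∈ insert v W, a ∉ g) : IsolatingSwap G W v (spokes v e) (fromEdgeSet {g}) where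
  notMem hv := by
    have : e.out.1 ∈ G.neighborSet v := hN ▸ e.out_fst_mem
    exact hW v hv _ this
  le := by
    rw [spokes_eq_fromEdgeSet_incidenceSet hN, fromEdgeSet_le]
    exact Set.sdiff_subset.trans (G.incidenceSet_subset v)
  disjoint := by
    rw [sdiff_spokes hN]
    simpa using hg.2.1
  isPlanar := by
    rw [sdiff_spokes hN]
    exact hg.2.2
  edgeCount_add_one := by
    rw [sdiff_spokes hN, edgeCount_sup_fromEdgeSet hg.1 hg.2.1,
      ← edgeCount_deleteIncidenceSet_add_vertexDegree G v, vertexDegree_eq_two he hN]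
  not_adj := by
    rw [sdiff_spokes hN]
    simp only [sup_adj, deleteIncidenceSet_adj, fromEdgeSet_adj, Set.mem_singleton_iff]
    grind [Sym2.mem_mk_left]
  exists_unaffected := by
    have hadj (t : Fin n) : G.Adj v t ↔ t ∈ e := by
      rw [← mem_neighborSet, hN, SetLike.mem_coe]
    refine ⟨insert v (e.toFinset ∪ g.toFinset), ?_, fun a ha t => ?_⟩
    · have := Finset.card_insert_le v (e.toFinset ∪ g.toFinset)
      have := Finset.card_union_le e.toFinset g.toFinset
      have := card_toFinset_sym2_le_two e
      have := card_toFinset_sym2_le_two g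
      omega
    · simp only [sdiff_spokes hN, sup_adj, deleteIncidenceSet_adj, fromEdgeSet_adj,
        Set.mem_singleton_iff]
      grind [Sym2.mem_toFinset, SimpleGraph.adj_comm, Sym2.mem_mk_left]

variable {h i M s : ℕ} {H : SimpleGraph (Fin h)}

lemma mem_markedGraphs_of_isolatingSwap (hG : (G, W) ∈ markedGraphs H n i (M + 1) s)
    (hswap : IsolatingSwap G W v A B) :
    (G \ A ⊔ B, insert v W) ∈ markedGraphs H n (i + 1) M (s + 5) := by
  obtain ⟨-, hM, hs, hi, -⟩ := mem_markedGraphs.1 hG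
  obtain ⟨U, hU, hagree⟩ := hswap.exists_unaffected
  have hedges := hswap.edgeCount_add_one
  refine mem_markedGraphs.2 ⟨hswap.isPlanar, by omega, ?_, ?_, hswap.not_adj⟩
  · exact (numOrderComponents_le_add_card hagree).trans (add_le_add hs hU)
  · rw [Finset.card_insert_of_notMem hswap.notMem, hi]

lemma card_mul_le_of_isolatingSwap {γ : Type*} {a b : ℕ}
    {S : Finset (SimpleGraph (Fin n) × Finset (Fin n))} (hS : S ⊆ markedGraphs H n i (M + 1) s)
    (moves : SimpleGraph (Fin n) × Finset (Fin n) → Finset γ)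
    (vertex : γ → Fin n) (removed added : γ → SimpleGraph (Fin n))
    (hints : SimpleGraph (Fin n) × Finset (Fin n) → Finset γ)
    (hmoves : ∀ x ∈ S, a ≤ (moves x).card)
    (hswap : ∀ x ∈ S, ∀ p ∈ moves x,
      IsolatingSwap x.1 x.2 (vertex p) (removed p) (added p))
    (hhints : ∀ G W, edgeCount G = M → W.card = i + 1 → (hints (G, W)).card ≤ b)
    (hmem : ∀ x ∈ S, ∀ p ∈ moves x,
      p ∈ hints (x.1 \ removed p ⊔ added p, insert (vertex p) x.2)) :
    S.card * a ≤ (markedGraphs H n (i + 1) M (s + 5)).card * b := by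
  refine card_mul_le_card_mul_of_undo moves
    (fun x p => (x.1 \ removed p ⊔ added p, insert (vertex p) x.2)) hints
    (fun y q => ((y.1 \ added q ⊔ removed q, y.2.erase (vertex q)), q)) hmoves
    (fun x hx p hp => mem_markedGraphs_of_isolatingSwap (hS hx) (hswap x hx p hp)) ?_ ?_
  · rintro ⟨G, W⟩ hy
    obtain ⟨-, hM, -, hi, -⟩ := mem_markedGraphs.1 hy
    exact hhints G W hM hi
  · rintro x hx p hp
    refine ⟨p, hmem x hx p hp, ?_⟩
    simp only [(hswap x hx p hp).undo, Finset.erase_insert (hswap x hx p hp).notMem]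

end IsolatingSwap

section LowDegree

variable {n : ℕ} {G : SimpleGraph (Fin n)} {W : Finset (Fin n)} {v u : Fin n} {e : Sym2 (Fin n)}

open Classical in
/-- The isolated vertices of `G` outside `W`. -/
noncomputable def isolatedVertices (G : SimpleGraph (Fin n)) (W : Finset (Fin n)) :
    Finset (Fin n) :=
  Finset.univ.filter fun v => v ∉ W ∧ G.neighborSet v = ∅

open Classical in
/-- The pairs of a vertex of degree one and its neighbour. -/
noncomputable def leaves (G : SimpleGraph (Fin n)) : Finset (Fin n × Fin n) :=
  Finset.univ.filter fun p => G.neighborSet p.1 = {p.2}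

open Classical in
/-- The vertices of degree two whose neighbours are not adjacent, with the pair of neighbours. -/
noncomputable def openVertices (G : SimpleGraph (Fin n)) : Finset (Fin n × Sym2 (Fin n)) :=
  Finset.univ.filter fun p => ¬ p.2.IsDiag ∧ p.2 ∉ G.edgeSet ∧ G.neighborSet p.1 = p.2

open Classical in
/-- The vertices of degree two whose neighbours are adjacent, with the pair of neighbours. -/
noncomputable def triangleVertices (G : SimpleGraph (Fin n)) : Finset (Fin n × Sym2 (Fin n)) :=
  Finset.univ.filter fun p => p.2 ∈ G.edgeSet ∧ G.neighborSet p.1 = p.2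

lemma mem_isolatedVertices : v ∈ isolatedVertices G W ↔ v ∉ W ∧ G.neighborSet v = ∅ := by
  simp only [isolatedVertices, Finset.mem_filter, Finset.mem_univ, true_and]

lemma mem_leaves : (v, u) ∈ leaves G ↔ G.neighborSet v = {u} := by
  simp only [leaves, Finset.mem_filter, Finset.mem_univ, true_and]

lemma mem_openVertices :
    (v, e) ∈ openVertices G ↔ ¬ e.IsDiag ∧ e ∉ G.edgeSet ∧ G.neighborSet v = e := by
  simp only [openVertices, Finset.mem_filter, Finset.mem_univ, true_and]

lemma mem_triangleVertices :
    (v, e) ∈ triangleVertices G ↔ e ∈ G.edgeSet ∧ G.neighborSet v = e := by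
  simp only [triangleVertices, Finset.mem_filter, Finset.mem_univ, true_and]

lemma exists_mem_lowDegree (W : Finset (Fin n)) (hv : vertexDegree G v < 3) :
    v ∈ W ∨ v ∈ isolatedVertices G W ∨ (∃ u, (v, u) ∈ leaves G) ∨
      (∃ e, (v, e) ∈ openVertices G) ∨ ∃ e, (v, e) ∈ triangleVertices G := by
  simp only [mem_isolatedVertices, mem_leaves, mem_openVertices, mem_triangleVertices]
  obtain hdeg | hdeg | hdeg :
      vertexDegree G v = 0 ∨ vertexDegree G v = 1 ∨ vertexDegree G v = 2 := by omega
  · have := (Set.ncard_eq_zero).1 hdeg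
    tauto
  · obtain ⟨u, hu⟩ := Set.ncard_eq_one.1 hdeg
    exact .inr (.inr (.inl ⟨u, hu⟩))
  · obtain ⟨u, w, huw, hN⟩ := Set.ncard_eq_two.1 hdeg
    rw [← Sym2.coe_mk] at hN
    by_cases hE : s(u, w) ∈ G.edgeSet
    · exact .inr (.inr (.inr (.inr ⟨s(u, w), hE, hN⟩)))
    · exact .inr (.inr (.inr (.inl ⟨s(u, w), by simpa using huw, hE, hN⟩)))

lemma card_filter_three_le_vertexDegree (G : SimpleGraph (Fin n)) :
    (Finset.univ.filter fun v => 3 ≤ vertexDegree G v).card * 3 ≤ 2 * edgeCount G := by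
  rw [← sum_vertexDegree, ← smul_eq_mul]
  exact (Finset.card_nsmul_le_sum _ _ _ fun v hv => (Finset.mem_filter.1 hv).2).trans
    (Finset.sum_le_sum_of_subset (Finset.filter_subset _ _))

lemma le_card_lowDegree {d : ℕ} (hd : 2 * edgeCount G + 12 * d + 3 * W.card < 3 * n) :
    d ≤ (isolatedVertices G W).card ∨ d ≤ (leaves G).card ∨ d ≤ (openVertices G).card ∨
      d ≤ (triangleVertices G).card := by
  classical
  have hcover : (Finset.univ : Finset (Fin n)) ⊆
      (Finset.univ.filter fun v => 3 ≤ vertexDegree G v) ∪ (W ∪ (isolatedVertices G W ∪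
        ((leaves G).image Prod.fst ∪
          ((openVertices G).image Prod.fst ∪ (triangleVertices G).image Prod.fst)))) := by
    intro v _
    simp only [Finset.mem_union, Finset.mem_filter, Finset.mem_univ, true_and, Finset.mem_image,
      Prod.exists, exists_and_right, exists_eq_right]
    exact (le_or_gt 3 (vertexDegree G v)).imp_right (exists_mem_lowDegree W)
  have hcard : n ≤ (Finset.univ.filter fun v => 3 ≤ vertexDegree G v).card + (W.card +
      ((isolatedVertices G W).card + ((leaves G).card +
        ((openVertices G).card + (triangleVertices G).card)))) := by
    calc n = (Finset.univ : Finset (Fin n)).card := by simp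
      _ ≤ _ := (Finset.card_le_card hcover).trans <|
        (Finset.card_union_le _ _).trans <| add_le_add le_rfl <|
        (Finset.card_union_le _ _).trans <| add_le_add le_rfl <|
        (Finset.card_union_le _ _).trans <| add_le_add le_rfl <|
        (Finset.card_union_le _ _).trans <| add_le_add Finset.card_image_le <|
        (Finset.card_union_le _ _).trans <| add_le_add Finset.card_image_le Finset.card_image_le
  have := card_filter_three_le_vertexDegree G
  omega

end LowDegree

section CountIsolations

variable {n h i M s d : ℕ} {H : SimpleGraph (Fin h)}
  {S : Finset (SimpleGraph (Fin n) × Finset (Fin n))}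

lemma card_mul_le_of_isolatedVertices (hS : S ⊆ markedGraphs H n i (M + 1) s)
    (hd : ∀ x ∈ S, d ≤ (isolatedVertices x.1 x.2).card) :
    S.card * (d * (M + 1)) ≤
      (markedGraphs H n (i + 1) M (s + 5)).card * ((i + 1) * (n * n)) := by
  classical
  refine card_mul_le_of_isolatingSwap hS
    (fun x => isolatedVertices x.1 x.2 ×ˢ x.1.edgeFinset) Prod.fst
    (fun p => fromEdgeSet {p.2}) (fun _ => ⊥) (fun y => y.2 ×ˢ Finset.univ) ?_ ?_ ?_ ?_
  · intro x hx
    rw [Finset.card_product, ← edgeCount_eq_card_edgeFinset, (mem_markedGraphs.1 (hS hx)).2.1]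
    exact Nat.mul_le_mul_right _ (hd x hx)
  · rintro ⟨G, W⟩ hx ⟨v, f⟩ hp
    obtain ⟨hv, hf⟩ := Finset.mem_product.1 hp
    obtain ⟨hvW, hN⟩ := mem_isolatedVertices.1 hv
    obtain ⟨hG, -, -, -, hW⟩ := mem_markedGraphs.1 (hS hx)
    refine isolatingSwap_deleteEdge hG hW hvW (mem_edgeFinset.1 hf) fun t ht => ?_
    exact (Set.eq_empty_iff_forall_notMem.1 hN t ht).elim
  · intro G W _ hW
    rw [Finset.card_product, hW]
    refine Nat.mul_le_mul_left _ ?_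
    calc Fintype.card (Sym2 (Fin n)) ≤ Fintype.card (Fin n × Fin n) :=
          Fintype.card_le_of_surjective _ Sym2.mk_surjective
      _ = n * n := by simp
  · intro x _ p _
    exact Finset.mem_product.2 ⟨Finset.mem_insert_self _ _, Finset.mem_univ _⟩

lemma card_mul_le_of_leaves (hS : S ⊆ markedGraphs H n i (M + 1) s)
    (hd : ∀ x ∈ S, d ≤ (leaves x.1).card) :
    S.card * d ≤ (markedGraphs H n (i + 1) M (s + 5)).card * ((i + 1) * n) := by
  refine card_mul_le_of_isolatingSwap hS (fun x => leaves x.1) Prod.fst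
    (fun p => fromEdgeSet {s(p.1, p.2)}) (fun _ => ⊥) (fun y => y.2 ×ˢ Finset.univ) hd ?_ ?_ ?_
  · rintro ⟨G, W⟩ hx ⟨v, u⟩ hp
    have hN := mem_leaves.1 hp
    have hvu : G.Adj v u := by simp [← mem_neighborSet, hN]
    obtain ⟨hG, -, -, -, hW⟩ := mem_markedGraphs.1 (hS hx)
    refine isolatingSwap_deleteEdge hG hW (fun hv => hW v hv u hvu) hvu fun t ht => ?_
    rw [← mem_neighborSet, hN, Set.mem_singleton_iff] at ht
    rw [ht]
  · intro G W _ hW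
    rw [Finset.card_product, hW, Finset.card_univ, Fintype.card_fin]
  · intro x _ p _
    exact Finset.mem_product.2 ⟨Finset.mem_insert_self _ _, Finset.mem_univ _⟩

lemma mem_addableSet_deleteIncidenceSet {G : SimpleGraph (Fin n)} {v : Fin n} {e : Sym2 (Fin n)}
    (hG : IsPlanar G) (he : ¬ e.IsDiag) (heG : e ∉ G.edgeSet) (hN : G.neighborSet v = e) :
    e ∈ addableSet (G.deleteIncidenceSet v) := by
  refine ⟨he, fun h => heG (edgeSet_mono (G.deleteIncidenceSet_le v) h), ?_⟩
  induction e with | _ u w =>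
  have hadj (t : Fin n) : G.Adj v t ↔ t ∈ s(u, w) := by
    rw [← mem_neighborSet, hN, SetLike.mem_coe]
  exact hG.suppress ((hadj u).2 (Sym2.mem_mk_left u w)) ((hadj w).2 (Sym2.mem_mk_right u w))

lemma card_mul_le_of_openVertices (hS : S ⊆ markedGraphs H n i (M + 1) s)
    (hd : ∀ x ∈ S, d ≤ (openVertices x.1).card) :
    S.card * d ≤ (markedGraphs H n (i + 1) M (s + 5)).card * ((i + 1) * M) := by
  classical
  refine card_mul_le_of_isolatingSwap hS (fun x => openVertices x.1) Prod.fst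
    (fun p => spokes p.1 p.2) (fun p => fromEdgeSet {p.2}) (fun y => y.2 ×ˢ y.1.edgeFinset)
    hd ?_ ?_ ?_
  · rintro ⟨G, W⟩ hx ⟨v, e⟩ hp
    obtain ⟨he, heG, hN⟩ := mem_openVertices.1 hp
    obtain ⟨hG, -, -, -, hW⟩ := mem_markedGraphs.1 (hS hx)
    refine isolatingSwap_rewire hW he hN (mem_addableSet_deleteIncidenceSet hG he heG hN)
      fun a ha hae => ?_
    have hva : G.Adj v a := by rwa [← mem_neighborSet, hN, SetLike.mem_coe]
    obtain rfl | ha := Finset.mem_insert.1 ha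
    · exact G.irrefl hva
    · exact hW a ha v hva.symm
  · intro G W hM hW
    rw [Finset.card_product, ← edgeCount_eq_card_edgeFinset, hM, hW]
  · rintro x _ ⟨v, e⟩ hp
    have he := (mem_openVertices.1 hp).1
    simp [he]

open Classical in
/-- The addable edges of `G - v` avoiding `v` and `W`. -/
noncomputable def freeEdges (G : SimpleGraph (Fin n)) (W : Finset (Fin n)) (v : Fin n) :
    Finset (Sym2 (Fin n)) :=
  Finset.univ.filter fun g =>
    g ∈ addableSet (G.deleteIncidenceSet v) ∧ ∀ a ∈ insert v W, a ∉ g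

lemma mem_freeEdges {G : SimpleGraph (Fin n)} {W : Finset (Fin n)} {v : Fin n}
    {g : Sym2 (Fin n)} : g ∈ freeEdges G W v ↔
      g ∈ addableSet (G.deleteIncidenceSet v) ∧ ∀ a ∈ insert v W, a ∉ g := by
  simp only [freeEdges, Finset.mem_filter, Finset.mem_univ, true_and]

lemma mul_le_card_freeEdges {G : SimpleGraph (Fin n)} {W : Finset (Fin n)} {v : Fin n} {K : ℕ}
    (hK : (W.card + 1 + K) * n ≤ (addableSet (G.deleteIncidenceSet v)).ncard) :
    K * n ≤ (freeEdges G W v).card := by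
  have hcover : addableSet (G.deleteIncidenceSet v) ⊆
      ↑(freeEdges G W v ∪ (insert v W ×ˢ Finset.univ).image fun z => s(z.1, z.2)) := by
    intro g hg
    by_cases hfree : ∀ a ∈ insert v W, a ∉ g
    · exact Finset.mem_union_left _ (mem_freeEdges.2 ⟨hg, hfree⟩)
    · push Not at hfree
      obtain ⟨a, ha, hag⟩ := hfree
      obtain ⟨b, rfl⟩ := Sym2.mem_iff_exists.1 hag
      exact Finset.mem_union_right _
        (Finset.mem_image.2 ⟨(a, b), Finset.mem_product.2 ⟨ha, Finset.mem_univ b⟩, rfl⟩)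
  have htouch : ((insert v W ×ˢ (Finset.univ : Finset (Fin n))).image fun z => s(z.1, z.2)).card
      ≤ (W.card + 1) * n := by
    refine Finset.card_image_le.trans ?_
    rw [Finset.card_product, Finset.card_univ, Fintype.card_fin]
    exact Nat.mul_le_mul_right _ (Finset.card_insert_le _ _)
  have hcard := Set.ncard_le_ncard hcover (Finset.finite_toSet _)
  rw [Set.ncard_coe_finset] at hcard
  have := hcard.trans (Finset.card_union_le _ _)
  rw [add_mul] at hK
  omega

lemma mul_le_card_sigma_freeEdges {G : SimpleGraph (Fin n)} {W : Finset (Fin n)} (hG : IsPlanar G)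
    (hGM : edgeCount G = M + 1) (hd : d ≤ (triangleVertices G).card)
    (hadd : ∀ G' : SimpleGraph (Fin n), IsPlanar G' → edgeCount G' ≤ M →
      (W.card + 2) * n ≤ (addableSet G').ncard) :
    d * n ≤ ((triangleVertices G).sigma fun p => freeEdges G W p.1).card := by
  rw [Finset.card_sigma]
  refine (Nat.mul_le_mul_right n hd).trans (Finset.card_nsmul_le_sum _ _ _ ?_)
  rintro ⟨v, e⟩ hp
  obtain ⟨he, hN⟩ := mem_triangleVertices.1 hp
  refine (one_mul n).ge.trans (mul_le_card_freeEdges ?_)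
  refine hadd (G.deleteIncidenceSet v) (hG.mono (G.deleteIncidenceSet_le v)) ?_
  have := edgeCount_deleteIncidenceSet_add_vertexDegree G v
  rw [vertexDegree_eq_two (G.not_isDiag_of_mem_edgeSet he) hN] at this
  omega

lemma card_mul_le_of_triangleVertices (hS : S ⊆ markedGraphs H n i (M + 1) s)
    (hd : ∀ x ∈ S, d ≤ (triangleVertices x.1).card)
    (hadd : ∀ G : SimpleGraph (Fin n), IsPlanar G → edgeCount G ≤ M →
      (i + 2) * n ≤ (addableSet G).ncard) :
    S.card * (d * n) ≤ (markedGraphs H n (i + 1) M (s + 5)).card * ((i + 1) * (M * M)) := by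
  classical
  refine card_mul_le_of_isolatingSwap hS
    (fun x => (triangleVertices x.1).sigma fun p => freeEdges x.1 x.2 p.1) (fun p => p.1.1)
    (fun p => spokes p.1.1 p.1.2) (fun p => fromEdgeSet {p.2})
    (fun y => (y.2 ×ˢ y.1.edgeFinset).sigma fun _ => y.1.edgeFinset) ?_ ?_ ?_ ?_
  · rintro ⟨G, W⟩ hx
    obtain ⟨hG, hM, -, rfl, -⟩ := mem_markedGraphs.1 (hS hx)
    exact mul_le_card_sigma_freeEdges hG hM (hd _ hx) hadd
  · rintro ⟨G, W⟩ hx ⟨⟨v, e⟩, g⟩ hp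
    obtain ⟨hp, hg⟩ := Finset.mem_sigma.1 hp
    obtain ⟨he, hN⟩ := mem_triangleVertices.1 hp
    obtain ⟨hg, hgW⟩ := mem_freeEdges.1 hg
    exact isolatingSwap_rewire (mem_markedGraphs.1 (hS hx)).2.2.2.2
      (G.not_isDiag_of_mem_edgeSet he) hN hg hgW
  · intro G W hM hW
    rw [Finset.card_sigma, Finset.sum_const, smul_eq_mul, Finset.card_product,
      ← edgeCount_eq_card_edgeFinset, hM, hW, mul_assoc]
  · rintro ⟨G, W⟩ _ ⟨⟨v, e⟩, g⟩ hp
    obtain ⟨hp, hg⟩ := Finset.mem_sigma.1 hp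
    obtain ⟨he, hN⟩ := mem_triangleVertices.1 hp
    have hgd := (mem_freeEdges.1 hg).1.1
    have hve : v ∉ e := by
      rw [← SetLike.mem_coe, ← hN, mem_neighborSet]
      exact G.irrefl
    have he' : e ∈ (G \ spokes v e).edgeSet := by
      rw [sdiff_spokes hN, edgeSet_deleteIncidenceSet]
      exact ⟨he, fun h => hve h.2⟩
    simp only [Finset.mem_sigma, Finset.mem_product, mem_edgeFinset]
    exact ⟨⟨Finset.mem_insert_self _ _, edgeSet_mono le_sup_left he'⟩,
      edgeSet_mono le_sup_right (by simpa using hgd)⟩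

open Classical in
lemma markedGraphs_subset_filter_lowDegree (hd : 2 * (M + 1) + 12 * d + 3 * i < 3 * n) :
    markedGraphs H n i (M + 1) s ⊆
      {x ∈ markedGraphs H n i (M + 1) s | d ≤ (isolatedVertices x.1 x.2).card} ∪
      {x ∈ markedGraphs H n i (M + 1) s | d ≤ (leaves x.1).card} ∪
      {x ∈ markedGraphs H n i (M + 1) s | d ≤ (openVertices x.1).card} ∪
      {x ∈ markedGraphs H n i (M + 1) s | d ≤ (triangleVertices x.1).card} := by
  rintro ⟨G, W⟩ hx
  obtain ⟨-, hM, -, hi, -⟩ := mem_markedGraphs.1 hx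
  have := le_card_lowDegree (G := G) (W := W) (d := d) (by omega)
  simp only [Finset.mem_union, Finset.mem_filter, hx, true_and]
  tauto

lemma le_mul_of_mul_le_mul_of_le_mul {x y a b k : ℕ} (hxy : x * a ≤ y * b) (ha : 0 < a)
    (hb : b ≤ k * a) : x ≤ y * k :=
  Nat.le_of_mul_le_mul_right
    (hxy.trans ((Nat.mul_le_mul_left y hb).trans_eq (mul_assoc y k a).symm)) ha

lemma card_markedGraphs_le_mul_isolate {D : ℕ} (hd : 2 * (M + 1) + 12 * d + 3 * i < 3 * n)
    (hdn : n ≤ D * d) (hDM : n ≤ D * (M + 1))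
    (hadd : ∀ G : SimpleGraph (Fin n), IsPlanar G → edgeCount G ≤ M →
      (i + 2) * n ≤ (addableSet G).ncard) :
    (markedGraphs H n i (M + 1) s).card ≤
      8 * (i + 1) * D ^ 2 * (markedGraphs H n (i + 1) M (s + 5)).card := by
  classical
  have hn0 : 0 < n := by omega
  have hd0 : 0 < d := Nat.pos_of_mul_pos_left (hn0.trans_le hdn)
  have hdn' : n ≤ D ^ 2 * d := hdn.trans (by gcongr; exact Nat.le_self_pow two_ne_zero D)
  have hM : M ≤ 2 * n := by omega
  have hclass {p : SimpleGraph (Fin n) × Finset (Fin n) → Prop} [DecidablePred p] :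
      ∀ x ∈ (markedGraphs H n i (M + 1) s).filter p, p x := fun x hx => (Finset.mem_filter.1 hx).2
  have hisolated := le_mul_of_mul_le_mul_of_le_mul (k := (i + 1) * D ^ 2)
    (card_mul_le_of_isolatedVertices (Finset.filter_subset _ _) hclass)
    (Nat.mul_pos hd0 M.succ_pos) <| calc
      (i + 1) * (n * n) ≤ (i + 1) * ((D * d) * (D * (M + 1))) := by gcongr
      _ = (i + 1) * D ^ 2 * (d * (M + 1)) := by ring
  have hleaves := le_mul_of_mul_le_mul_of_le_mul (k := (i + 1) * D ^ 2)
    (card_mul_le_of_leaves (Finset.filter_subset _ _) hclass) hd0 <| calc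
      (i + 1) * n ≤ (i + 1) * (D ^ 2 * d) := by gcongr
      _ = (i + 1) * D ^ 2 * d := by ring
  have hopen := le_mul_of_mul_le_mul_of_le_mul (k := 2 * (i + 1) * D ^ 2)
    (card_mul_le_of_openVertices (Finset.filter_subset _ _) hclass) hd0 <| calc
      (i + 1) * M ≤ (i + 1) * (2 * (D ^ 2 * d)) := by gcongr; exact hM.trans (by gcongr)
      _ = 2 * (i + 1) * D ^ 2 * d := by ring
  have htriangle := le_mul_of_mul_le_mul_of_le_mul (k := 4 * (i + 1) * D ^ 2)
    (card_mul_le_of_triangleVertices (Finset.filter_subset _ _) hclass hadd)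
    (Nat.mul_pos hd0 hn0) <| calc
      (i + 1) * (M * M) ≤ (i + 1) * ((2 * (D ^ 2 * d)) * (2 * n)) := by
        gcongr
        exact hM.trans (by gcongr)
      _ = 4 * (i + 1) * D ^ 2 * (d * n) := by ring
  have hunion := (Finset.card_le_card (markedGraphs_subset_filter_lowDegree hd)).trans <|
    (Finset.card_union_le _ _).trans <| add_le_add ((Finset.card_union_le _ _).trans <|
      add_le_add ((Finset.card_union_le _ _).trans <| add_le_add hisolated hleaves) hopen) htriangle
  exact hunion.trans_eq (by ring)

end CountIsolations

section Rounds

variable {h n m d D : ℕ} {H : SimpleGraph (Fin h)}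

lemma card_markedGraphs_zero_le_pow_mul {i M s : ℕ} (hd : 2 * (M + i) + 12 * d + 3 * i < 3 * n)
    (hdn : n ≤ D * d) (hDM : n ≤ D * (M + 1))
    (hadd : ∀ G : SimpleGraph (Fin n), IsPlanar G → edgeCount G < M + i →
      (i + 1) * n ≤ (addableSet G).ncard) :
    (markedGraphs H n 0 (M + i) s).card ≤
      (8 * i * D ^ 2) ^ i * (markedGraphs H n i M (s + 5 * i)).card := by
  induction i generalizing M with
  | zero => simp
  | succ i ih =>
    calc (markedGraphs H n 0 (M + (i + 1)) s).card
        = (markedGraphs H n 0 (M + 1 + i) s).card := by rw [add_right_comm, add_assoc]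
      _ ≤ (8 * i * D ^ 2) ^ i * (markedGraphs H n i (M + 1) (s + 5 * i)).card :=
          ih (by omega) (hDM.trans (by gcongr; omega)) fun G hG hM =>
            (Nat.mul_le_mul_right n (by omega)).trans (hadd G hG (by omega))
      _ ≤ (8 * (i + 1) * D ^ 2) ^ i * (8 * (i + 1) * D ^ 2 *
            (markedGraphs H n (i + 1) M (s + 5 * i + 5)).card) := by
          gcongr
          · omega
          · exact card_markedGraphs_le_mul_isolate (by omega) hdn hDM fun G hG hM =>
              hadd G hG (by omega)
      _ = _ := by rw [← mul_assoc (_ ^ i), ← pow_succ, mul_add_one 5 i, ← add_assoc]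

/-- The factor by which one round can lose graphs, apart from the choice of the added edge and of
the planted copy. -/
def roundLoss (h D : ℕ) : ℕ := 2 * (8 * h * D ^ 2) ^ h

lemma card_markedGraphs_zero_mul_addMin_le (hH : H.IsTree) {M : ℕ} (hM : M + h = m + 1)
    (hd : 2 * (m + 1) + 12 * d + 3 * h < 3 * n) (hdn : n ≤ D * d) (hDM : n ≤ D * (M + 1))
    (hadd : ∀ G : SimpleGraph (Fin n), IsPlanar G → edgeCount G ≤ m →
      (h + 1) * n ≤ (addableSet G).ncard) (s : ℕ) :
    (markedGraphs H n 0 m s).card * addMin n m ≤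
      (markedGraphs H n 0 m (s + (6 * h + 2))).card *
        ((s + (6 * h + 2)) * (roundLoss h D * n)) := by
  have hh : 0 < h := Fin.pos_iff_nonempty.2 hH.connected.nonempty
  have hplant := card_markedGraphs_le_mul_plant H hH n M (s + 2 + 5 * h)
  rw [show M + (h - 1) = m by omega, show s + 2 + 5 * h + h = s + (6 * h + 2) by ring] at hplant
  calc (markedGraphs H n 0 m s).card * addMin n m
      ≤ (markedGraphs H n 0 (M + h) (s + 2)).card * (m + 1) := by
        rw [hM]
        exact card_markedGraphs_mul_addMin_le H n m s
    _ ≤ (8 * h * D ^ 2) ^ h * (markedGraphs H n h M (s + 2 + 5 * h)).card * (2 * n) := by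
        gcongr
        · exact card_markedGraphs_zero_le_pow_mul (by omega) hdn hDM fun G hG hGm =>
            hadd G hG (by omega)
        · omega
    _ ≤ (8 * h * D ^ 2) ^ h * ((markedGraphs H n 0 m (s + (6 * h + 2))).card *
          (s + (6 * h + 2))) * (2 * n) := by gcongr
    _ = _ := by rw [roundLoss]; ring

end Rounds

section Probability

variable {h n m : ℕ} {H : SimpleGraph (Fin h)}

lemma le_addMin {k : ℕ} (hne : (planarSet n m).Nonempty)
    (hk : ∀ G ∈ planarSet n m, k ≤ (addableSet G).ncard) : k ≤ addMin n m :=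
  le_csInf (hne.image _) (Set.forall_mem_image.2 hk)

lemma three_pow_mul_card_markedGraphs_zero_le {C q T : ℕ} (hA : 0 < addMin n m)
    (hT : 3 * (T * (C + 1) * q) ≤ addMin n m)
    (hround : ∀ s, (markedGraphs H n 0 m s).card * addMin n m ≤
      (markedGraphs H n 0 m (s + C)).card * ((s + C) * q)) :
    (3 : ℝ) ^ T * (markedGraphs H n 0 m (T - 1)).card ≤
      (markedGraphs H n 0 m (T - 1 + T * C)).card := by
  have hthree (j : ℕ) (hj : j < T) : 3 * (markedGraphs H n 0 m (T - 1 + j * C)).card ≤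
      (markedGraphs H n 0 m (T - 1 + (j + 1) * C)).card := by
    have hs : T - 1 + j * C + C ≤ T * (C + 1) := by
      have : (j + 1) * C ≤ T * C := Nat.mul_le_mul_right C hj
      rw [add_one_mul] at this
      rw [mul_add_one]
      omega
    rw [add_one_mul, ← add_assoc]
    refine Nat.le_of_mul_le_mul_right ?_ hA
    calc 3 * (markedGraphs H n 0 m (T - 1 + j * C)).card * addMin n m
        = 3 * ((markedGraphs H n 0 m (T - 1 + j * C)).card * addMin n m) := mul_assoc _ _ _
      _ ≤ 3 * ((markedGraphs H n 0 m (T - 1 + j * C + C)).card * (T * (C + 1) * q)) := by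
          exact Nat.mul_le_mul_left 3 ((hround _).trans (by gcongr))
      _ = (markedGraphs H n 0 m (T - 1 + j * C + C)).card * (3 * (T * (C + 1) * q)) := by ring
      _ ≤ (markedGraphs H n 0 m (T - 1 + j * C + C)).card * addMin n m := by gcongr
  have := geom_le (u := fun j => ((markedGraphs H n 0 m (T - 1 + j * C)).card : ℝ))
    (by norm_num : (0 : ℝ) ≤ 3) T fun j hj => by exact_mod_cast hthree j hj
  simpa using this

lemma planarProb_lt_exp_neg {C q T : ℕ} (hT0 : 0 < T) (hA : 0 < addMin n m)
    (hT : 3 * (T * (C + 1) * q) ≤ addMin n m)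
    (hround : ∀ s, (markedGraphs H n 0 m s).card * addMin n m ≤
      (markedGraphs H n 0 m (s + C)).card * ((s + C) * q)) :
    planarProb n m (fun G => numOrderComponents H G < T) < Real.exp (-T) := by
  have hcount : (3 : ℝ) ^ T * {G ∈ planarSet n m | numOrderComponents H G < T}.ncard ≤
      (planarSet n m).ncard := by
    calc (3 : ℝ) ^ T * {G ∈ planarSet n m | numOrderComponents H G < T}.ncard
        = 3 ^ T * (markedGraphs H n 0 m (T - 1)).card := by
          simp only [card_markedGraphs_zero, Nat.lt_iff_le_pred hT0]
      _ ≤ (markedGraphs H n 0 m (T - 1 + T * C)).card :=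
          three_pow_mul_card_markedGraphs_zero_le hA hT hround
      _ ≤ (planarSet n m).ncard := by
          rw [card_markedGraphs_zero]
          exact_mod_cast Set.ncard_le_ncard (Set.sep_subset _ _) (Set.toFinite _)
  calc planarProb n m (fun G => numOrderComponents H G < T) ≤ ((3 : ℝ) ^ T)⁻¹ := by
        refine div_le_of_le_mul₀ (by positivity) (by positivity) ?_
        rwa [inv_mul_eq_div, le_div_iff₀' (by positivity)]
    _ < (Real.exp 1 ^ T)⁻¹ := inv_strictAnti₀ (by positivity) <|
        pow_lt_pow_left₀ Real.exp_one_lt_three (Real.exp_pos 1).le hT0.ne'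
    _ = Real.exp (-T) := by rw [Real.exp_neg, Real.exp_one_pow]

lemma ceil_mul_le {A B : ℕ} (hB : 0 < B) (hn : 0 < n) (hA : B * n ≤ A) :
    ⌈1 / (B : ℝ) * A / n⌉₊ * (B * n) ≤ 2 * A := by
  have : (⌈1 / (B : ℝ) * A / n⌉₊ : ℝ) * (B * n) ≤ A + B * n := by
    calc (⌈1 / (B : ℝ) * A / n⌉₊ : ℝ) * (B * n) ≤ (1 / (B : ℝ) * A / n + 1) * (B * n) := by
          gcongr
          exact (Nat.ceil_lt_add_one (by positivity)).le
      _ = A + B * n := by field_simp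
  have : ⌈1 / (B : ℝ) * A / n⌉₊ * (B * n) ≤ A + B * n := by exact_mod_cast this
  omega

lemma exists_eventually_round_parameters {c : ℝ} (hc : 0 < c) (h : ℕ) :
    ∃ D : ℕ, 0 < D ∧ ∀ᶠ n : ℕ in atTop, ∀ m : ℕ, c * n ≤ m → (m : ℝ) ≤ (1 + 1 / 10) * n →
      ∃ M d : ℕ, M + h = m + 1 ∧ 2 * (m + 1) + 12 * d + 3 * h < 3 * n ∧ n ≤ D * d ∧
        n ≤ D * (M + 1) := by
  refine ⟨max 80 ⌈2 / c⌉₊, by positivity, ?_⟩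
  filter_upwards [eventually_ge_atTop (80 * h + 80), eventually_ge_atTop ⌈2 * h / c⌉₊]
    with n hn hnc m hcm hm
  have h2h : 2 * (h : ℝ) ≤ c * n := by rwa [← div_le_iff₀' hc, ← Nat.ceil_le]
  have hhm : h ≤ m := by
    have : (h : ℝ) ≤ m := by linarith [h.cast_nonneg (α := ℝ)]
    exact_mod_cast this
  have hm' : 10 * m ≤ 11 * n := by
    have : (10 : ℝ) * m ≤ 11 * n := by linarith
    exact_mod_cast this
  refine ⟨m + 1 - h, n / 40, by omega, by omega, ?_, ?_⟩
  · calc n ≤ 80 * (n / 40) := by omega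
      _ ≤ _ := Nat.mul_le_mul_right _ (le_max_left _ _)
  · have hcast : ((m + 1 - h + 1 : ℕ) : ℝ) = m + 2 - h := by
      push_cast [Nat.cast_sub (hhm.trans m.le_succ)]
      ring
    have : (n : ℝ) ≤ (max 80 ⌈2 / c⌉₊ : ℕ) * (m + 1 - h + 1 : ℕ) := by
      calc (n : ℝ) = 2 / c * (c * n / 2) := by field_simp
        _ ≤ (max 80 ⌈2 / c⌉₊ : ℕ) * (m + 1 - h + 1 : ℕ) := by
          gcongr
          · exact (Nat.le_ceil _).trans (Nat.cast_le.2 (le_max_right _ _))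
          · rw [hcast]
            linarith
    exact_mod_cast this

end Probability

theorem tree_components_lower_bound_general (h : ℕ) (H : SimpleGraph (Fin h)) (hH : H.IsTree)
    (c : ℝ) (hc : 0 < c) :
    ∃ lam : ℝ, 0 < lam ∧ ∃ ε : ℝ, 0 < ε ∧ ∀ᶠ n : ℕ in atTop, ∀ m : ℕ,
      c * n ≤ m → (m : ℝ) ≤ (1 + ε) * n →
        planarProb n m (fun G => numOrderComponents H G < ⌈lam * (addMin n m : ℝ) / n⌉₊) <
          Real.exp (-(⌈lam * (addMin n m : ℝ) / n⌉₊ : ℝ)) := by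
  obtain ⟨D, hD, hparam⟩ := exists_eventually_round_parameters hc h
  obtain ⟨B, hB⟩ : ∃ B, B = 6 * (6 * h + 2 + 1) * roundLoss h D := ⟨_, rfl⟩
  have hB0 : 0 < B := by
    have : 0 < h := Fin.pos_iff_nonempty.2 hH.connected.nonempty
    rw [hB, roundLoss]
    positivity
  obtain ⟨ε, hε, hadd⟩ := exists_eventually_mul_le_ncard_addableSet (B + h + 1)
  refine ⟨1 / B, by positivity, min ε (1 / 10), by positivity, ?_⟩
  filter_upwards [hparam, hadd, eventually_gt_atTop 0] with n hparam hadd hn m hcm hm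
  have hadd (G : SimpleGraph (Fin n)) (hG : IsPlanar G) (hGm : edgeCount G ≤ m) :
      (B + h + 1) * n ≤ (addableSet G).ncard :=
    hadd G hG <| (Nat.cast_le.2 hGm).trans (hm.trans (by gcongr; exact min_le_left _ _))
  obtain ⟨M, d, hM, hd, hdn, hDM⟩ := hparam m hcm (hm.trans (by gcongr; exact min_le_right _ _))
  obtain hempty | hne := (planarSet n m).eq_empty_or_nonempty
  · simp only [planarProb, hempty, Set.ncard_empty, Nat.cast_zero, div_zero, Real.exp_pos]
  have hA : B * n ≤ addMin n m := le_addMin hne fun G hG =>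
    (Nat.mul_le_mul_right n (by omega)).trans (hadd G hG.1 hG.2.le)
  have hA0 : 0 < addMin n m := (Nat.mul_pos hB0 hn).trans_le hA
  have hceil := ceil_mul_le hB0 hn hA
  refine planarProb_lt_exp_neg (C := 6 * h + 2) (q := roundLoss h D * n)
    (Nat.ceil_pos.2 (by positivity)) hA0 ?_ <|
    card_markedGraphs_zero_mul_addMin_le hH hM hd hdn hDM fun G hG hGm =>
      (Nat.mul_le_mul_right n (by omega)).trans (hadd G hG hGm)
  refine Nat.le_of_mul_le_mul_left (le_of_eq_of_le ?_ hceil) two_pos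
  rw [hB]
  ring

theorem tree_components_lower_bound (h : ℕ) (H : SimpleGraph (Fin h)) (hH : H.IsTree)
    (c : ℝ) (hc : 0 < c) :
    ∃ lam : ℝ, 0 < lam ∧
      ∀ m : ℕ → ℕ,
        (∀ᶠ n : ℕ in atTop, c * (n : ℝ) ≤ (m n : ℝ)) →
        (∀ ε : ℝ, 0 < ε → ∀ᶠ n : ℕ in atTop, (m n : ℝ) ≤ (1 + ε) * n) →
        ∀ᶠ n : ℕ in atTop,
          planarProb n (m n)
              (fun G => numOrderComponents H G < ⌈lam * (addMin n (m n) : ℝ) / n⌉₊) <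
            Real.exp (-(⌈lam * (addMin n (m n) : ℝ) / n⌉₊ : ℝ)) := by
  obtain ⟨lam, hlam, ε, hε, hgeneral⟩ := tree_components_lower_bound_general h H hH c hc
  exact ⟨lam, hlam, fun m hmc hmε => by
    filter_upwards [hgeneral, hmc, hmε ε hε] with n hn using hn (m n)⟩
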